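/- arXiv:1511.02093 — 4 statements merged into one kernel-verified Lean document; each statement's English description precedes it below -/
import Mathlib

section
/- Let q be a power of a prime p, let k be a positive integer with k ≡ 2 (mod 4) and k > 2, and let D = {x ∈ F_{q^k}^* : Tr_{q^2/q}(x^{(q^k-1)/(q^2-1)}) = 0}. Then #{b ∈ F_{q^k}^* : w(c_b) = (q-1)(q^{k-1} − q^{k/2})/(q+1)} = (q^k - 1)/(q+1) and #{b ∈ F_{q^k}^* : w(c_b) = (q-1)(q^{k-1} + q^{k/2 - 1})/(q+1)} = q(q^k - 1)/(q+1); in particular every nonzero codeword of C_D has one of these two weights, and the minimum distance of C_D is (q-1)(q^{k-1} − q^{k/2})/(q+1). -/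
open Finset

lemma aux_exists_root {K : Type} [Field K] [Fintype K] {d h : ℕ}
    (hd : d * h = Fintype.card K - 1) {x : K} (hx : x ≠ 0) (hxh : x ^ h = 1) :
    ∃ y : K, y ≠ 0 ∧ y ^ d = x := by
  classical
  have hc : 0 < Fintype.card K - 1 := by have := Fintype.one_lt_card (α := K); omega
  have hh : 0 < h := Nat.pos_of_ne_zero (by rintro rfl; omega)
  obtain ⟨g, hg⟩ := IsCyclic.exists_generator (α := Kˣ)
  have hog : orderOf g = d * h := by
    rw [orderOf_eq_card_of_forall_mem_zpowers hg, Nat.card_eq_fintype_card, Fintype.card_units, hd]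
  obtain ⟨i, hi⟩ := mem_powers_iff_mem_zpowers.2 (hg (Units.mk0 x hx))
  have hi2 : g ^ i = Units.mk0 x hx := hi
  have h1 : g ^ (i * h) = 1 := by
    rw [pow_mul, hi2]; ext; simpa using hxh
  have h2 := orderOf_dvd_of_pow_eq_one h1
  rw [hog] at h2
  obtain ⟨j, rfl⟩ := Nat.dvd_of_mul_dvd_mul_right hh h2
  refine ⟨((g ^ j : Kˣ) : K), Units.ne_zero _, ?_⟩
  have := congrArg (Units.val) hi2
  simp only [Units.val_mk0] at this
  rw [← this, ← Units.val_pow_eq_pow_val, ← pow_mul, mul_comm]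

lemma aux_card_one {K : Type} [Field K] [Fintype K] [DecidableEq K] {d h : ℕ}
    (hd : d * h = Fintype.card K - 1) : #{y : K | y ^ d = 1} = d := by
  have hc : 0 < Fintype.card K - 1 := by have := Fintype.one_lt_card (α := K); omega
  have hh : 0 < h := Nat.pos_of_ne_zero (by rintro rfl; omega)
  have hd0 : 0 < d := Nat.pos_of_ne_zero (by rintro rfl; omega)
  obtain ⟨g, hg⟩ := IsCyclic.exists_generator (α := Kˣ)
  have hog : orderOf g = d * h := by
    rw [orderOf_eq_card_of_forall_mem_zpowers hg, Nat.card_eq_fintype_card, Fintype.card_units, hd]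
  have hp : IsPrimitiveRoot ((g : K) ^ h) d := by
    have := (IsPrimitiveRoot.orderOf g)
    rw [hog] at this
    have h2 := this.pow (a := h) (by positivity) (mul_comm d h)
    simpa using (IsPrimitiveRoot.coe_units_iff.2 h2)
  refine Eq.trans ?_ hp.card_nthRootsFinset
  congr 1
  ext y
  simp [Polynomial.mem_nthRootsFinset hd0]

lemma aux_card_fib {K : Type} [Field K] [Fintype K] [DecidableEq K] {d h : ℕ}
    (hd : d * h = Fintype.card K - 1) {x : K} (hx : x ≠ 0) :
    #{y : K | y ^ d = x} = if x ^ h = 1 then d else 0 := by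
  split_ifs with hxh
  · obtain ⟨y0, hy0, hy⟩ := aux_exists_root hd hx hxh
    refine Eq.trans (Eq.symm ?_) (aux_card_one hd)
    apply Finset.card_bij (fun y _ => y0 * y)
    · intro a ha
      simp only [mem_filter, mem_univ, true_and] at ha ⊢
      rw [mul_pow, ha, hy, mul_one]
    · intro a _ b _ hab
      exact mul_left_cancel₀ hy0 hab
    · intro b hb
      simp only [mem_filter, mem_univ, true_and] at hb
      refine ⟨b / y0, ?_, by field_simp⟩
      simp only [mem_filter, mem_univ, true_and, div_pow, hb, hy]
      exact div_self hx
  · rw [Finset.card_eq_zero, Finset.filter_eq_empty_iff]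
    rintro y - rfl
    apply hxh
    have hd0 : d ≠ 0 := by
      rintro rfl
      have := Fintype.one_lt_card (α := K); omega
    have hy : y ≠ 0 := by rintro rfl; simp [hd0] at hx
    rw [← pow_mul, hd, FiniteField.pow_card_sub_one_eq_one y hy]

/-- fibrewise count along `y ↦ y^d` -/
lemma aux_card_pull {K : Type} [Field K] [Fintype K] [DecidableEq K] {d h : ℕ}
    (hd : d * h = Fintype.card K - 1) (P : K → Prop) [DecidablePred P] :
    #{y : K | y ≠ 0 ∧ P (y ^ d)} = d * #{x : K | x ^ h = 1 ∧ P x} := by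
  have hc : 0 < Fintype.card K - 1 := by have := Fintype.one_lt_card (α := K); omega
  have hh : h ≠ 0 := (by rintro rfl; omega)
  have hd0 : d ≠ 0 := by rintro rfl; omega
  rw [Finset.card_eq_sum_card_fiberwise (f := fun y => y ^ d) (t := {x : K | x ^ h = 1 ∧ P x})]
  · rw [mul_comm, ← smul_eq_mul, ← Finset.sum_const]
    apply Finset.sum_congr rfl
    intro x hx
    simp only [mem_filter, mem_univ, true_and] at hx
    have hx0 : x ≠ 0 := by
      rintro rfl
      simp [hh] at hx
    have := aux_card_fib hd hx0
    rw [if_pos hx.1] at this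
    refine Eq.trans ?_ this
    congr 1
    ext y
    simp only [mem_filter, mem_univ, true_and]
    constructor
    · rintro ⟨-, h⟩; exact h
    · intro h
      refine ⟨⟨?_, h ▸ hx.2⟩, h⟩
      rintro rfl
      simp [hd0] at h
      exact hx0 h.symm
  · intro y hy
    simp only [mem_filter, mem_univ, true_and, coe_filter, Set.mem_ofPred_eq] at hy ⊢
    refine ⟨?_, hy.2⟩
    rw [← pow_mul, hd, FiniteField.pow_card_sub_one_eq_one y hy.1]

section core
variable {Fq Fk : Type} [Field Fq] [Field Fk] [Fintype Fq] [Fintype Fk] [Algebra Fq Fk]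

lemma aux_trace_frob (z : Fk) :
    Algebra.trace Fq Fk (z ^ Fintype.card Fq) = Algebra.trace Fq Fk z := by
  have := Algebra.trace_eq_of_algEquiv (FiniteField.frobeniusAlgEquivOfAlgebraic Fq Fk) z
  simpa using this

lemma aux_finrank {q k : ℕ} (hcq : Fintype.card Fq = q) (hck : Fintype.card Fk = q ^ k) :
    Module.finrank Fq Fk = k := by
  have h := Module.card_eq_pow_finrank (K := Fq) (V := Fk)
  rw [hcq, hck] at h
  have := Fintype.one_lt_card (α := Fq)
  exact (Nat.pow_right_injective (by omega) h).symm

lemma aux_trace_zero {q k : ℕ} (hcq : Fintype.card Fq = q) (hck : Fintype.card Fk = q ^ k)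
    (hk : Even k) {w : Fk} (hw : w ^ q = -w) : Algebra.trace Fq Fk w = 0 := by
  apply FaithfulSMul.algebraMap_injective Fq Fk
  rw [FiniteField.algebraMap_trace_eq_sum_pow, aux_finrank hcq hck, Nat.card_eq_fintype_card, hcq,
    map_zero]
  have hneg : (-1 : Fk) ^ q = -1 := by
    have := FiniteField.pow_card (-1 : Fq)
    rw [hcq] at this
    simpa using congrArg (algebraMap Fq Fk) this
  have h1 : ∀ i, w ^ q ^ i = (-1) ^ i * w := by
    intro i
    induction i with
    | zero => simp
    | succ i ih =>
      rw [pow_succ, pow_mul, ih, mul_pow, hw, pow_right_comm, hneg, pow_succ]; ring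
  simp_rw [h1]
  rw [← Finset.sum_mul]
  obtain ⟨j, rfl⟩ := hk
  rw [neg_one_geom_sum, if_pos ⟨j, rfl⟩, zero_mul]

lemma aux_add_pow (x y : Fk) {q : ℕ} (hcq : Fintype.card Fq = q) :
    (x + y) ^ q = x ^ q + y ^ q := by
  have := (FiniteField.frobeniusAlgEquivOfAlgebraic Fq Fk).map_add x y
  simpa [hcq] using this

variable [DecidableEq Fq] [DecidableEq Fk]

/-- character sum in terms of the count of solutions of Tr = 1 -/
lemma aux_S {q k n : ℕ} (hcq : Fintype.card Fq = q) (hck : Fintype.card Fk = q ^ k)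
    (hn : (q ^ 2 - 1) * n = q ^ k - 1) (c : Fk) (ψ : AddChar Fq ℂ) (hψ : ψ ≠ 1) :
    ∑ y : Fk, ψ (Algebra.trace Fq Fk (c * y ^ (q + 1))) =
      (q : ℂ) ^ k - q * #{y : Fk | Algebra.trace Fq Fk (c * y ^ (q + 1)) = 1} ∧
    #{y : Fk | Algebra.trace Fq Fk (c * y ^ (q + 1)) ≠ 0} =
      (q - 1) * #{y : Fk | Algebra.trace Fq Fk (c * y ^ (q + 1)) = 1} := by
  have hq1 : 1 < q := hcq ▸ Fintype.one_lt_card (α := Fq)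
  set N : Fq → ℕ := fun t => #{y : Fk | Algebra.trace Fq Fk (c * y ^ (q + 1)) = t} with hN
  have hh : (q + 1) * ((q - 1) * n) = Fintype.card Fk - 1 := by
    rw [hck, ← hn, ← mul_assoc]
    congr 1
    have := Nat.sq_sub_sq q 1
    simpa using this.symm
  have hNt : ∀ t ≠ 0, N t = N 1 := by
    intro t ht
    obtain ⟨s, hs0, hs⟩ := aux_exists_root hh (x := algebraMap Fq Fk t) (by simpa using ht) (by
      rw [← map_pow, pow_mul, ← hcq, FiniteField.pow_card_sub_one_eq_one t ht]; simp)
    symm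
    apply Finset.card_bij (fun y _ => s * y)
    · intro a ha
      simp only [mem_filter, mem_univ, true_and] at ha ⊢
      rw [mul_pow, hs, mul_left_comm, ← Algebra.smul_def, map_smul, ha]; simp
    · intro a _ b _ hab
      exact mul_left_cancel₀ hs0 hab
    · intro b hb
      simp only [mem_filter, mem_univ, true_and] at hb
      refine ⟨b / s, ?_, by field_simp⟩
      simp only [mem_filter, mem_univ, true_and]
      have : t • Algebra.trace Fq Fk (c * (b / s) ^ (q + 1)) = t := by
        rw [← map_smul, Algebra.smul_def, ← hs, ← hb]
        congr 1
        rw [div_pow]; field_simp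
      rw [smul_eq_mul] at this
      exact mul_left_cancel₀ ht (this.trans (mul_one t).symm)
  have htot : ∑ t : Fq, N t = q ^ k := by
    rw [← hck, ← Finset.card_univ]
    exact (Finset.card_eq_sum_card_fiberwise (fun _ _ => by simp)).symm
  have hS : ∑ y : Fk, ψ (Algebra.trace Fq Fk (c * y ^ (q + 1))) = ∑ t : Fq, (N t : ℂ) * ψ t := by
    rw [← Finset.sum_fiberwise univ (fun y => Algebra.trace Fq Fk (c * y ^ (q + 1)))]
    apply Finset.sum_congr rfl
    intro t _
    rw [Finset.sum_congr rfl (g := fun _ => ψ t), Finset.sum_const, nsmul_eq_mul]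
    intro y hy
    simp only [mem_filter, mem_univ, true_and] at hy
    rw [hy]
  have hsplit : ∀ t, (N t : ℂ) = N 1 + if t = 0 then (N 0 - N 1 : ℂ) else 0 := by
    intro t
    split_ifs with h
    · subst h; ring
    · rw [hNt t h]; ring
  have hNtot : (N 0 : ℂ) + (q - 1) * N 1 = q ^ k := by
    have : ((∑ t : Fq, N t : ℕ) : ℂ) = q ^ k := by rw [htot]; push_cast; rfl
    rw [← this]
    push_cast
    rw [Finset.sum_congr rfl (fun t _ => hsplit t)]
    rw [Finset.sum_add_distrib]
    simp [hcq]
    ring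
  refine ⟨?_, ?_⟩
  · rw [hS]
    have : ∀ t, (N t : ℂ) * ψ t = N 1 * ψ t + if t = 0 then (N 0 - N 1 : ℂ) else 0 := by
      intro t
      by_cases h : t = 0
      · subst h; simp
      · simp [h, hNt t h]
    simp_rw [this]
    rw [Finset.sum_add_distrib, ← Finset.mul_sum, AddChar.sum_eq_zero_of_ne_one hψ]
    simp only [mul_zero, zero_add, Finset.sum_ite_eq', Finset.mem_univ, if_true]
    rw [← hNtot]; ring
  · have h1 : N 0 + #{y : Fk | Algebra.trace Fq Fk (c * y ^ (q + 1)) ≠ 0} = q ^ k := by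
      rw [← hck, ← Finset.card_univ]
      exact Finset.card_filter_add_card_filter_not _
    have h2 : ((N 0 + #{y : Fk | Algebra.trace Fq Fk (c * y ^ (q + 1)) ≠ 0} : ℕ) : ℂ) = q ^ k := by
      rw [h1]; push_cast; rfl
    have : ((#{y : Fk | Algebra.trace Fq Fk (c * y ^ (q + 1)) ≠ 0} : ℕ) : ℂ) =
      (((q - 1) * N 1 : ℕ) : ℂ) := by
      push_cast [Nat.cast_sub hq1.le] at h2 ⊢
      linear_combination h2 - hNtot
    exact_mod_cast this

lemma aux_sq {q k n : ℕ} (hcq : Fintype.card Fq = q) (hck : Fintype.card Fk = q ^ k)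
    (hk : Even k) (hodd : Odd n)
    (hn : (q ^ 2 - 1) * n = q ^ k - 1) {c : Fk} (hc : c ≠ 0) :
    ((q : ℤ) ^ k - q * #{y : Fk | Algebra.trace Fq Fk (c * y ^ (q + 1)) = 1}) ^ 2 =
      q ^ k * if c ^ ((q - 1) * n) = -1 then (q : ℤ) ^ 2 else 1 := by
  have hq1 : 1 < q := hcq ▸ Fintype.one_lt_card (α := Fq)
  have hq2 : 1 < q ^ 2 := Nat.one_lt_pow (by norm_num) hq1
  set T := Algebra.trace Fq Fk with hT
  obtain ⟨ψ, hψ⟩ : ∃ ψ : AddChar Fq ℂ, ψ ≠ 1 := by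
    have h := AddChar.FiniteField.primitiveChar_to_Complex_isPrimitive Fq
    exact ⟨_, by simpa using h one_ne_zero⟩
  have hψinv : ψ⁻¹ ≠ 1 := by simpa using hψ
  -- the trace character
  let χ : AddChar Fk ℂ := ψ.compAddMonoidHom T.toAddMonoidHom
  have hχ : ∀ x, χ x = ψ (T x) := fun x => rfl
  have hχ1 : χ ≠ 1 := by
    obtain ⟨t, ht⟩ := AddChar.ne_one_iff.1 hψ
    obtain ⟨x, rfl⟩ := Algebra.trace_surjective Fq Fk t
    exact AddChar.ne_one_iff.2 ⟨x, ht⟩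
  have hprim := AddChar.IsPrimitive.of_ne_one hχ1
  have hS1 := (aux_S hcq hck hn c ψ hψ).1
  have hS2 := (aux_S hcq hck hn c ψ⁻¹ hψinv).1
  -- Frobenius inverse
  have hfrob : ∀ u : Fk, ∃ v : Fk, v ^ q = c * u := by
    intro u
    obtain ⟨v, hv⟩ := (FiniteField.frobeniusAlgEquivOfAlgebraic Fq Fk).surjective (c * u)
    exact ⟨v, by simpa [hcq] using hv⟩
  choose v hv using hfrob
  have hexp : ∀ z u : Fk, T (c * (z + u) ^ (q + 1)) - T (c * z ^ (q + 1)) =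
      T (c * u ^ (q + 1)) + T (z * (c * u ^ q + v u)) := by
    intro z u
    have e1 : T (z * v u) = T (c * u * z ^ q) := by
      rw [← hv u, ← mul_pow, mul_comm, ← hcq, hT, aux_trace_frob]
    rw [mul_add, map_add, e1, sub_eq_iff_eq_add, ← map_add, ← map_add, ← map_add]
    congr 1
    rw [pow_succ, aux_add_pow z u hcq]
    ring
  have hv0 : ∀ u, c * u ^ q + v u = 0 ↔ c ^ q * u ^ q ^ 2 + c * u = 0 := by
    intro u
    have : (c * u ^ q + v u) ^ q = c ^ q * u ^ q ^ 2 + c * u := by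
      rw [aux_add_pow _ _ hcq, hv, mul_pow, ← pow_mul, sq]
    rw [← this, pow_eq_zero_iff (by omega)]
  have hQ0 : ∀ u, c * u ^ q + v u = 0 → T (c * u ^ (q + 1)) = 0 := by
    intro u hu
    rw [hv0] at hu
    apply aux_trace_zero hcq hck hk
    have e : (c * u ^ (q + 1)) ^ q = (c ^ q * u ^ q ^ 2) * u ^ q := by ring
    rw [e, eq_neg_of_add_eq_zero_left hu]
    ring
  have hprod : (∑ y : Fk, ψ (T (c * y ^ (q + 1)))) * (∑ y : Fk, ψ⁻¹ (T (c * y ^ (q + 1)))) =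
      (q : ℂ) ^ k * #{u : Fk | c ^ q * u ^ q ^ 2 + c * u = 0} := by
    rw [mul_comm, Finset.sum_mul_sum]
    have : ∀ z : Fk, ∑ y, ψ⁻¹ (T (c * z ^ (q + 1))) * ψ (T (c * y ^ (q + 1))) =
        ∑ u, ψ (T (c * u ^ (q + 1))) * χ (z * (c * u ^ q + v u)) := by
      intro z
      symm
      apply Fintype.sum_equiv (Equiv.addLeft z)
      intro u
      simp only [Equiv.coe_addLeft]
      rw [hχ, ← AddChar.map_add_eq_mul, ← hexp, AddChar.inv_apply, ← AddChar.map_add_eq_mul]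
      congr 1; ring
    simp_rw [this]
    rw [Finset.sum_comm]
    simp_rw [← Finset.mul_sum, AddChar.sum_mulShift _ hprim]
    rw [Finset.card_filter]
    push_cast
    rw [Finset.mul_sum]
    apply Finset.sum_congr rfl
    intro u _
    by_cases hu : c * u ^ q + v u = 0
    · rw [if_pos hu, hQ0 u hu, if_pos ((hv0 u).1 hu), hck]
      simp
    · rw [if_neg hu, if_neg (fun h => hu ((hv0 u).2 h))]
      simp
  have hrad : #{u : Fk | c ^ q * u ^ q ^ 2 + c * u = 0} =
      if c ^ ((q - 1) * n) = -1 then q ^ 2 else 1 := by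
    have hx : -(c ^ (q - 1))⁻¹ ≠ 0 := by simp [hc]
    have h1 := aux_card_fib (by rw [hn, hck]) hx
    have h2 : ({u : Fk | c ^ q * u ^ q ^ 2 + c * u = 0} : Finset Fk) =
        insert 0 ({u : Fk | u ^ (q ^ 2 - 1) = -(c ^ (q - 1))⁻¹} : Finset Fk) := by
      ext u
      simp only [mem_filter, mem_univ, true_and, mem_insert]
      by_cases hu : u = 0
      · subst hu
        simp; right; omega
      · simp only [hu, false_or]
        have e1 : c ^ q = c ^ (q - 1) * c := by rw [← pow_succ]; congr 1; omega
        have e2 : u ^ q ^ 2 = u ^ (q ^ 2 - 1) * u := by rw [← pow_succ]; congr 1; omega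
        have e3 : c ^ q * u ^ q ^ 2 + c * u = (c * u) * (c ^ (q - 1) * u ^ (q ^ 2 - 1) + 1) := by
          rw [e1, e2]; ring
        rw [e3, mul_eq_zero, or_iff_right (mul_ne_zero hc hu)]
        have hc1 : c ^ (q - 1) ≠ 0 := pow_ne_zero _ hc
        constructor
        · intro h
          field_simp
          linear_combination h
        · intro h
          rw [h]; field_simp; ring
    rw [h2, Finset.card_insert_of_notMem, h1]
    · have e : (-(c ^ (q - 1))⁻¹) ^ n = 1 ↔ c ^ ((q - 1) * n) = -1 := by
        rw [hodd.neg_pow, inv_pow, ← pow_mul, neg_eq_iff_eq_neg, inv_eq_iff_eq_inv, inv_neg, inv_one]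
      simp only [e]
      split_ifs
      · omega
      · rfl
    · simp only [mem_filter, mem_univ, true_and]
      rw [zero_pow (by omega)]
      exact hx.symm
  rw [hS1, hS2, hrad] at hprod
  rw [sq]
  have : (((q : ℤ) ^ k - q * #{y : Fk | T (c * y ^ (q + 1)) = 1}) * 
    ((q : ℤ) ^ k - q * #{y : Fk | T (c * y ^ (q + 1)) = 1}) : ℂ) =
      (q : ℂ) ^ k * ((if c ^ ((q - 1) * n) = -1 then q ^ 2 else 1 : ℕ) : ℂ) := by
    simpa using hprod
  have h3 : ((q : ℤ) ^ k - q * #{y : Fk | T (c * y ^ (q + 1)) = 1}) * 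
    ((q : ℤ) ^ k - q * #{y : Fk | T (c * y ^ (q + 1)) = 1}) =
      (q : ℤ) ^ k * ((if c ^ ((q - 1) * n) = -1 then q ^ 2 else 1 : ℕ) : ℤ) := by
    exact_mod_cast this
  rw [h3]
  push_cast
  rfl

end core

lemma aux_sign {q m M : ℕ} (hq : 1 < q) (hm : Odd m)
    {r : Prop} [Decidable r]
    (h : ((q : ℤ) ^ (2 * m) - q * ((q + 1) * M : ℕ)) ^ 2 =
      q ^ (2 * m) * if r then (q : ℤ) ^ 2 else 1) :
    ((q : ℤ) + 1) * M = if r then (q : ℤ) ^ (2 * m - 1) - (q : ℤ) ^ m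
      else (q : ℤ) ^ (2 * m - 1) + (q : ℤ) ^ (m - 1) := by
  obtain ⟨j, rfl⟩ := hm
  have hq0 : (q : ℤ) ≠ 0 := by positivity
  have hmod : (q : ℤ) ≡ -1 [ZMOD (q + 1)] := by
    rw [Int.modEq_iff_dvd]; exact ⟨-1, by ring⟩
  have hM : (q : ℤ) * ((q + 1) * M : ℕ) ≡ 0 [ZMOD (q + 1)] := by
    rw [Int.modEq_iff_dvd]; exact ⟨- (q * M), by push_cast; ring⟩
  have h2 : ¬ ((q : ℤ) + 1) ∣ 2 := by
    intro h
    have := Int.le_of_dvd (by norm_num) h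
    omega
  have hS : (q : ℤ) ^ (2 * (2 * j + 1)) - q * ((q + 1) * M : ℕ) ≡ 1 [ZMOD (q + 1)] := by
    have h1 := (hmod.pow (2 * (2 * j + 1))).sub hM
    rw [Even.neg_one_pow ⟨2 * j + 1, by ring⟩] at h1
    simpa using h1
  set S := (q : ℤ) ^ (2 * (2 * j + 1)) - q * ((q + 1) * M : ℕ) with hSdef
  by_cases hr : r
  · rw [if_pos hr] at h ⊢
    have h3 : S ^ 2 = ((q : ℤ) ^ (2 * j + 2)) ^ 2 := by rw [h]; ring
    have h4 : (q : ℤ) ^ (2 * j + 2) ≡ 1 [ZMOD (q + 1)] := by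
      have h1 := (hmod.pow (2 * j + 2))
      rwa [Even.neg_one_pow ⟨j + 1, by ring⟩] at h1
    rcases sq_eq_sq_iff_eq_or_eq_neg.1 h3 with h5 | h5
    · apply mul_left_cancel₀ hq0
      have e : 2 * (2 * j + 1) - 1 = 4 * j + 1 := by omega
      rw [e]
      push_cast at hSdef
      have e2 : (q : ℤ) * ((q + 1) * M) = q ^ (2 * (2 * j + 1)) - q ^ (2 * j + 2) := by
        rw [← h5, hSdef]; ring
      rw [e2]; ring
    · exfalso
      rw [h5] at hS
      have := (h4.neg.symm.trans hS)
      rw [Int.modEq_iff_dvd] at this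
      exact h2 (by simpa using this)
  · rw [if_neg hr] at h ⊢
    have h3 : S ^ 2 = ((q : ℤ) ^ (2 * j + 1)) ^ 2 := by rw [h]; ring
    have h4 : (q : ℤ) ^ (2 * j + 1) ≡ -1 [ZMOD (q + 1)] := by
      have h1 := (hmod.pow (2 * j + 1))
      rwa [Odd.neg_one_pow ⟨j, rfl⟩] at h1
    rcases sq_eq_sq_iff_eq_or_eq_neg.1 h3 with h5 | h5
    · exfalso
      rw [h5] at hS
      have := (h4.symm.trans hS)
      rw [Int.modEq_iff_dvd] at this
      exact h2 (by simpa using this)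
    · apply mul_left_cancel₀ hq0
      have e : 2 * (2 * j + 1) - 1 = 4 * j + 1 := by omega
      have e0 : 2 * j + 1 - 1 = 2 * j := by omega
      rw [e, e0]
      push_cast at hSdef
      have e2 : (q : ℤ) * ((q + 1) * M) = q ^ (2 * (2 * j + 1)) + q ^ (2 * j + 1) := by
        have : (q : ℤ) ^ (2 * j + 1) = -S := by rw [h5]; ring
        rw [this, hSdef]; ring
      rw [e2]; ring

lemma aux_n (q m : ℕ) (hq : 1 < q) (hm : Odd m) :
    ∃ n, Odd n ∧ (q ^ 2 - 1) * n = q ^ (2 * m) - 1 := by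
  refine ⟨∑ i ∈ Finset.range m, (q ^ 2) ^ i, ?_, ?_⟩
  · obtain ⟨j, rfl⟩ := hm
    rcases Nat.even_or_odd q with h | h
    · rw [Finset.sum_range_succ']
      simp only [pow_zero]
      apply Even.add_one
      apply Finset.even_sum
      intro i _
      have : Even (q ^ 2) := h.pow_of_ne_zero (by norm_num)
      exact this.pow_of_ne_zero (by omega)
    · have : Odd (#(Finset.filter (fun i => Odd ((q ^ 2) ^ i)) (Finset.range (2 * j + 1)))) := by
        rw [Finset.filter_true_of_mem (fun i _ => (h.pow).pow)]
        simp
      rwa [Finset.odd_sum_iff_odd_card_odd]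
  · have hq2 : 1 < q ^ 2 := Nat.one_lt_pow (by norm_num) hq
    obtain ⟨x, hx⟩ : ∃ x, q ^ 2 = x + 1 := ⟨q ^ 2 - 1, by omega⟩
    have := geom_sum_mul_add x m
    rw [pow_mul, hx, ← this, mul_comm]
    simp

/-- **Proposition 1, `k ≡ 2 (mod 4)`, `k > 2`.** Let `q` be a power of a
prime `p`, `k ≡ 2 (mod 4)`, `k > 2`, and
`D = {x ∈ F_{q^k}ˣ : Tr_{q²/q}(x^{(q^k-1)/(q²-1)}) = 0}`.  Then exactly `(q^k-1)/(q+1)`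
nonzero `b` give weight `(q-1)(q^{k-1} - q^{k/2})/(q+1)`, exactly `q(q^k-1)/(q+1)` give
weight `(q-1)(q^{k-1} + q^{k/2-1})/(q+1)`, every nonzero codeword has one of these two
weights, and the minimum distance is the smaller weight. -/
theorem stmt7 (p e q k : ℕ) [Fact p.Prime] (he : 0 < e) (hq : q = p ^ e)
    (hk4 : k % 4 = 2) (hk2 : 2 < k)
    (Fq Ff Fk : Type) [Field Fq] [Field Ff] [Field Fk]
    [Fintype Fq] [Fintype Ff] [Fintype Fk]
    [Algebra Fq Ff] [Algebra Ff Fk] [Algebra Fq Fk] [IsScalarTower Fq Ff Fk]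
    (hcq : Fintype.card Fq = q) (hcf : Fintype.card Ff = q ^ 2)
    (hck : Fintype.card Fk = q ^ k)
    (hnorm : ∀ x : Fk,
      algebraMap Ff Fk (Algebra.norm Ff x) = x ^ ((q ^ k - 1) / (q ^ 2 - 1))) :
    (Nat.card {b : Fk // b ≠ 0 ∧
        (Nat.card {d : Fk // (d ≠ 0 ∧ Algebra.trace Fq Ff (Algebra.norm Ff d) = 0) ∧
            Algebra.trace Fq Fk (b * d) ≠ 0} : ℚ)
          = ((q : ℚ) - 1) * ((q : ℚ) ^ (k - 1) - (q : ℚ) ^ (k / 2)) / ((q : ℚ) + 1)} : ℚ)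
      = ((q : ℚ) ^ k - 1) / ((q : ℚ) + 1) ∧
    (Nat.card {b : Fk // b ≠ 0 ∧
        (Nat.card {d : Fk // (d ≠ 0 ∧ Algebra.trace Fq Ff (Algebra.norm Ff d) = 0) ∧
            Algebra.trace Fq Fk (b * d) ≠ 0} : ℚ)
          = ((q : ℚ) - 1) * ((q : ℚ) ^ (k - 1) + (q : ℚ) ^ (k / 2 - 1)) / ((q : ℚ) + 1)} : ℚ)
      = (q : ℚ) * ((q : ℚ) ^ k - 1) / ((q : ℚ) + 1) ∧
    (∀ b : Fk, b ≠ 0 →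
      (Nat.card {d : Fk // (d ≠ 0 ∧ Algebra.trace Fq Ff (Algebra.norm Ff d) = 0) ∧
          Algebra.trace Fq Fk (b * d) ≠ 0} : ℚ)
          = ((q : ℚ) - 1) * ((q : ℚ) ^ (k - 1) - (q : ℚ) ^ (k / 2)) / ((q : ℚ) + 1) ∨
      (Nat.card {d : Fk // (d ≠ 0 ∧ Algebra.trace Fq Ff (Algebra.norm Ff d) = 0) ∧
          Algebra.trace Fq Fk (b * d) ≠ 0} : ℚ)
          = ((q : ℚ) - 1) * ((q : ℚ) ^ (k - 1) + (q : ℚ) ^ (k / 2 - 1)) / ((q : ℚ) + 1)) ∧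
    (∀ b : Fk, b ≠ 0 →
      ((q : ℚ) - 1) * ((q : ℚ) ^ (k - 1) - (q : ℚ) ^ (k / 2)) / ((q : ℚ) + 1)
        ≤ (Nat.card {d : Fk // (d ≠ 0 ∧ Algebra.trace Fq Ff (Algebra.norm Ff d) = 0) ∧
            Algebra.trace Fq Fk (b * d) ≠ 0} : ℚ)) := by
  classical
  have hq1 : 1 < q := hcq ▸ Fintype.one_lt_card (α := Fq)
  have hq2 : 1 < q ^ 2 := Nat.one_lt_pow (by norm_num) hq1
  obtain ⟨m, rfl⟩ : ∃ m, k = 2 * m := ⟨k / 2, by omega⟩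
  have hm : Odd m := by rw [Nat.odd_iff]; omega
  have hkm : 2 * m / 2 = m := by omega
  obtain ⟨n, hodd, hn⟩ := aux_n q m hq1 hm
  have hdiv : (q ^ (2 * m) - 1) / (q ^ 2 - 1) = n := by
    rw [← hn]; exact Nat.mul_div_cancel_left n (by omega)
  rw [hdiv] at hnorm
  rw [hkm]
  have hh : (q + 1) * ((q - 1) * n) = Fintype.card Fk - 1 := by
    rw [hck, ← hn, ← mul_assoc]
    congr 1
    have := Nat.sq_sub_sq q 1
    simpa using this.symm
  have hneg : (-1 : Fk) ^ q = -1 := by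
    have := FiniteField.pow_card (-1 : Fq)
    rw [hcq] at this
    simpa using congrArg (algebraMap Fq Fk) this
  have hn0 : n ≠ 0 := by rintro rfl; simp at hodd
  have hh0 : (q - 1) * n ≠ 0 := mul_ne_zero (by omega) hn0
  -- membership in D
  have hD : ∀ d : Fk, (d ≠ 0 ∧ Algebra.trace Fq Ff (Algebra.norm Ff d) = 0) ↔
      d ^ ((q - 1) * n) = -1 := by
    intro d
    have h1 : algebraMap Fq Fk (Algebra.trace Fq Ff (Algebra.norm Ff d)) =
        d ^ n * (1 + d ^ ((q - 1) * n)) := by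
      rw [IsScalarTower.algebraMap_apply Fq Ff Fk, FiniteField.algebraMap_trace_eq_sum_pow,
        aux_finrank hcq hcf, Nat.card_eq_fintype_card, hcq]
      simp only [Finset.sum_range_succ, Finset.sum_range_zero, zero_add, pow_zero, pow_one,
        map_add, map_pow, hnorm]
      have e : d ^ n * d ^ ((q - 1) * n) = (d ^ n) ^ q := by
        rw [← pow_add, ← pow_mul]
        congr 1
        obtain ⟨s, rfl⟩ : ∃ s, q = s + 1 := ⟨q - 1, by omega⟩
        simp; ring
      rw [mul_add, e]; ring
    have h2 : Algebra.trace Fq Ff (Algebra.norm Ff d) = 0 ↔ d ^ n * (1 + d ^ ((q - 1) * n)) = 0 := by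
      rw [← h1]; simp
    rw [h2]
    constructor
    · rintro ⟨hd, h⟩
      rcases mul_eq_zero.1 h with h | h
      · exact absurd h (pow_ne_zero _ hd)
      · linear_combination h
    · intro h
      refine ⟨?_, by rw [h]; ring⟩
      rintro rfl
      rw [zero_pow hh0] at h
      simp at h
  -- a base point of D
  obtain ⟨a, ha0, ha⟩ : ∃ a : Fk, a ≠ 0 ∧ a ^ ((q - 1) * n) = -1 :=
    aux_exists_root (d := (q - 1) * n) (h := q + 1) (by rw [mul_comm, hh]) (by simp)
      (by rw [pow_succ, hneg]; ring)
  -- weights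
  have hw : ∀ b : Fk, b ≠ 0 →
      (Nat.card {d : Fk // (d ≠ 0 ∧ Algebra.trace Fq Ff (Algebra.norm Ff d) = 0) ∧
            Algebra.trace Fq Fk (b * d) ≠ 0} : ℚ) =
      if b ^ ((q - 1) * n) = 1 then
        ((q : ℚ) - 1) * ((q : ℚ) ^ (2 * m - 1) - (q : ℚ) ^ m) / ((q : ℚ) + 1)
      else ((q : ℚ) - 1) * ((q : ℚ) ^ (2 * m - 1) + (q : ℚ) ^ (m - 1)) / ((q : ℚ) + 1) := by
    intro b hb
    have hc0 : b * a ≠ 0 := mul_ne_zero hb ha0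
    have hsq := aux_sq (Fq := Fq) hcq hck (even_two_mul m) hodd hn hc0
    have hS := (aux_S (Fq := Fq) hcq hck hn (b * a)
      (AddChar.FiniteField.primitiveChar_to_Complex Fq) (by
        have h := AddChar.FiniteField.primitiveChar_to_Complex_isPrimitive Fq
        simpa using h one_ne_zero)).2
    have hN : #{y : Fk | Algebra.trace Fq Fk (b * a * y ^ (q + 1)) = 1} =
        (q + 1) * #{x : Fk | x ^ ((q - 1) * n) = 1 ∧ Algebra.trace Fq Fk (b * a * x) = 1} := by
      rw [← aux_card_pull hh (fun x => Algebra.trace Fq Fk (b * a * x) = 1)]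
      congr 1
      ext y
      simp only [mem_filter, mem_univ, true_and]
      refine ⟨fun h => ⟨?_, h⟩, fun h => h.2⟩
      rintro rfl
      simp at h
    have hW : #{y : Fk | Algebra.trace Fq Fk (b * a * y ^ (q + 1)) ≠ 0} =
        (q + 1) * #{x : Fk | x ^ ((q - 1) * n) = 1 ∧ Algebra.trace Fq Fk (b * a * x) ≠ 0} := by
      rw [← aux_card_pull hh (fun x => Algebra.trace Fq Fk (b * a * x) ≠ 0)]
      congr 1
      ext y
      simp only [mem_filter, mem_univ, true_and]
      refine ⟨fun h => ⟨?_, h⟩, fun h => h.2⟩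
      rintro rfl
      simp at h
    have hwt : Nat.card {d : Fk // (d ≠ 0 ∧ Algebra.trace Fq Ff (Algebra.norm Ff d) = 0) ∧
            Algebra.trace Fq Fk (b * d) ≠ 0} =
        #{x : Fk | x ^ ((q - 1) * n) = 1 ∧ Algebra.trace Fq Fk (b * a * x) ≠ 0} := by
      rw [Nat.card_eq_fintype_card, Fintype.card_subtype]
      symm
      apply Finset.card_bij (fun x _ => a * x)
      · intro x hx
        simp only [mem_filter, mem_univ, true_and, hD] at hx ⊢
        rw [mul_pow, ha, hx.1, mul_one, ← mul_assoc]
        exact ⟨rfl, hx.2⟩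
      · intro x _ y _ hxy
        exact mul_left_cancel₀ ha0 hxy
      · intro d hd
        simp only [mem_filter, mem_univ, true_and, hD] at hd
        refine ⟨d / a, ?_, by field_simp⟩
        simp only [mem_filter, mem_univ, true_and, div_pow, hd.1, ha]
        refine ⟨div_self (by simp), ?_⟩
        have : b * a * (d / a) = b * d := by field_simp
        rw [this]; exact hd.2
    rw [← hwt] at hW
    set M := #{x : Fk | x ^ ((q - 1) * n) = 1 ∧ Algebra.trace Fq Fk (b * a * x) = 1}
    set w := Nat.card {d : Fk // (d ≠ 0 ∧ Algebra.trace Fq Ff (Algebra.norm Ff d) = 0) ∧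
            Algebra.trace Fq Fk (b * d) ≠ 0}
    rw [hN] at hsq hS
    have hM := aux_sign hq1 hm hsq
    have hiff : (b * a) ^ ((q - 1) * n) = -1 ↔ b ^ ((q - 1) * n) = 1 := by
      rw [mul_pow, ha, mul_neg_one, neg_inj]
    simp only [hiff] at hM
    rw [hW, mul_left_comm] at hS
    have hwM : w = (q - 1) * M := Nat.eq_of_mul_eq_mul_left (by omega) hS
    have hwQ : (w : ℚ) = ((q : ℚ) - 1) * M := by
      rw [hwM]; push_cast [Nat.cast_sub hq1.le]; rfl
    have hpos : (q : ℚ) + 1 ≠ 0 := by positivity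
    have hMQ : ((q : ℚ) + 1) * M = if b ^ ((q - 1) * n) = 1 then
        (q : ℚ) ^ (2 * m - 1) - (q : ℚ) ^ m
      else (q : ℚ) ^ (2 * m - 1) + (q : ℚ) ^ (m - 1) := by
      have := congrArg (Int.cast : ℤ → ℚ) hM
      push_cast at this
      exact this
    rw [hwQ]
    split_ifs at hMQ ⊢ with hr
    · rw [eq_div_iff hpos, ← hMQ]; ring
    · rw [eq_div_iff hpos, ← hMQ]; ring
  have hqQ : (1 : ℚ) < q := by exact_mod_cast hq1
  have hlt : ((q : ℚ) - 1) * ((q : ℚ) ^ (2 * m - 1) - (q : ℚ) ^ m) / ((q : ℚ) + 1) <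
      ((q : ℚ) - 1) * ((q : ℚ) ^ (2 * m - 1) + (q : ℚ) ^ (m - 1)) / ((q : ℚ) + 1) := by
    have h1 : (0 : ℚ) < (q : ℚ) ^ m := by positivity
    have h2 : (0 : ℚ) < (q : ℚ) ^ (m - 1) := by positivity
    apply div_lt_div_of_pos_right _ (by positivity)
    apply mul_lt_mul_of_pos_left _ (by linarith)
    linarith
  -- counts
  have hcnt1 : #{b : Fk | b ^ ((q - 1) * n) = 1} = (q - 1) * n :=
    aux_card_one (h := q + 1) (by rw [mul_comm, hh])
  have hhQ : ((q : ℚ) + 1) * (((q - 1) * n : ℕ) : ℚ) = (q : ℚ) ^ (2 * m) - 1 := by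
    have h1 : (q + 1) * ((q - 1) * n) + 1 = q ^ (2 * m) := by
      rw [hh, hck]; have : 0 < q ^ (2 * m) := by positivity
      omega
    have h2 := congrArg (Nat.cast : ℕ → ℚ) h1
    push_cast at h2 ⊢
    linarith
  have hpos : (q : ℚ) + 1 ≠ 0 := by positivity
  refine ⟨?_, ?_, ?_, ?_⟩
  · rw [Nat.card_eq_fintype_card, Fintype.card_subtype, eq_div_iff hpos, ← hhQ, mul_comm, ← hcnt1]
    congr 3
    ext b
    simp only [mem_filter, mem_univ, true_and]
    constructor
    · rintro ⟨hb, h⟩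
      rw [hw b hb] at h
      by_contra hr
      rw [if_neg hr] at h
      exact hlt.ne' h
    · intro h
      have hb : b ≠ 0 := by
        rintro rfl
        rw [zero_pow hh0] at h
        simp at h
      exact ⟨hb, by rw [hw b hb, if_pos h]⟩
  · rw [Nat.card_eq_fintype_card, Fintype.card_subtype]
    have hset : ({b : Fk | b ≠ 0 ∧
        (Nat.card {d : Fk // (d ≠ 0 ∧ Algebra.trace Fq Ff (Algebra.norm Ff d) = 0) ∧
            Algebra.trace Fq Fk (b * d) ≠ 0} : ℚ)
          = ((q : ℚ) - 1) * ((q : ℚ) ^ (2 * m - 1) + (q : ℚ) ^ (m - 1)) / ((q : ℚ) + 1)} : Finset Fk)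
        = ({b : Fk | ¬ b ^ ((q - 1) * n) = 1} : Finset Fk).erase 0 := by
      ext b
      simp only [mem_filter, mem_univ, true_and, mem_erase]
      apply and_congr_right
      intro hb
      rw [hw b hb]
      split_ifs with hr
      · simp only [hr, not_true_eq_false, iff_false]
        exact hlt.ne
      · simp [hr]
    rw [hset]
    have h1 : #(({b : Fk | ¬ b ^ ((q - 1) * n) = 1} : Finset Fk).erase 0) + 1 =
        #{b : Fk | ¬ b ^ ((q - 1) * n) = 1} := by
      apply Finset.card_erase_add_one
      simp only [mem_filter, mem_univ, true_and]
      rw [zero_pow hh0]; simp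
    have h2 : #{b : Fk | b ^ ((q - 1) * n) = 1} + #{b : Fk | ¬ b ^ ((q - 1) * n) = 1} =
        q ^ (2 * m) := by
      rw [← hck, ← Finset.card_univ]
      exact Finset.card_filter_add_card_filter_not _
    rw [← h1, hcnt1] at h2
    have h3 := congrArg (Nat.cast : ℕ → ℚ) h2
    rw [Nat.cast_add, Nat.cast_add, Nat.cast_one, Nat.cast_pow] at h3
    rw [eq_div_iff hpos]
    linear_combination ((q : ℚ) + 1) * h3 - hhQ
  · intro b hb
    rw [hw b hb]
    split_ifs
    · left; rfl
    · right; rfl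
  · intro b hb
    rw [hw b hb]
    split_ifs
    · exact le_rfl
    · exact hlt.le
end

section
/- Let q be a power of a prime p and let k be an even positive integer. Then for every x ∈ F_{q^k}^*, one has Tr_{q^2/q}(x^{(q^k-1)/(q^2-1)}) = 0 if and only if x^{(q^k-1)/(q+1)} = −1. Consequently, if α is a primitive element of F_{q^k}, then the set {x ∈ F_{q^k}^* : Tr_{q^2/q}(x^{(q^k-1)/(q^2-1)}) = 0} equals the subgroup ⟨α^{q+1}⟩ when q is even, and equals the coset α^{(q+1)/2}⟨α^{q+1}⟩ when q is odd. -/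
theorem pow_eq_one_iff_mem {G : Type*} [Group G] (a : G) (ha : ∀ g : G, g ∈ Subgroup.zpowers a)
    (N m : ℕ) (hN : 0 < N) (ho : orderOf a = N * m) (u : G) :
    u ^ N = 1 ↔ u ∈ Subgroup.zpowers (a ^ m) := by
  constructor
  · intro h
    obtain ⟨j, rfl⟩ := Subgroup.mem_zpowers_iff.1 (ha u)
    rw [← zpow_natCast, ← zpow_mul] at h
    have h2 := orderOf_dvd_iff_zpow_eq_one.2 h
    rw [ho] at h2
    push_cast at h2
    rw [mul_comm j] at h2
    have h3 : (m : ℤ) ∣ j := Int.dvd_of_mul_dvd_mul_left (by exact_mod_cast hN.ne') h2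
    obtain ⟨c, rfl⟩ := h3
    refine Subgroup.mem_zpowers_iff.2 ⟨c, ?_⟩
    rw [zpow_mul, zpow_natCast]
  · intro h
    obtain ⟨c, rfl⟩ := Subgroup.mem_zpowers_iff.1 h
    have h1 : (a ^ m) ^ N = 1 := by
      rw [← pow_mul, mul_comm, ← ho, pow_orderOf_eq_one]
    rw [← zpow_natCast, ← zpow_mul, mul_comm, zpow_mul, zpow_natCast, h1, one_zpow]


/-- Let `q` be a power of a prime `p` and `k` an even positive integer.
For `x ∈ F_{q^k}ˣ` one has `Tr_{q²/q}(x^{(q^k-1)/(q²-1)}) = 0 ↔ x^{(q^k-1)/(q+1)} = -1`.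
Consequently, for a primitive element `α` of `F_{q^k}`, the set
`{x ∈ F_{q^k}ˣ : Tr_{q²/q}(x^{(q^k-1)/(q²-1)}) = 0}` is `⟨α^{q+1}⟩` if `q` is even, and
the coset `α^{(q+1)/2}⟨α^{q+1}⟩` if `q` is odd.
Here `x^{(q^k-1)/(q²-1)}` is the norm from `Fk` to `Ff` (hypothesis `hnorm`). -/
theorem stmt8 (p e q k : ℕ) [Fact p.Prime] (he : 0 < e) (hq : q = p ^ e)
    (hk : 0 < k) (hke : Even k)
    (Fq Ff Fk : Type) [Field Fq] [Field Ff] [Field Fk]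
    [Fintype Fq] [Fintype Ff] [Fintype Fk]
    [Algebra Fq Ff] [Algebra Ff Fk]
    (hcq : Fintype.card Fq = q) (hcf : Fintype.card Ff = q ^ 2)
    (hck : Fintype.card Fk = q ^ k)
    (hnorm : ∀ x : Fk,
      algebraMap Ff Fk (Algebra.norm Ff x) = x ^ ((q ^ k - 1) / (q ^ 2 - 1)))
    (α : Fkˣ) (hα : ∀ g : Fkˣ, g ∈ Subgroup.zpowers α) :
    (∀ x : Fk, x ≠ 0 →
      (Algebra.trace Fq Ff (Algebra.norm Ff x) = 0 ↔ x ^ ((q ^ k - 1) / (q + 1)) = -1)) ∧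
    (Even q →
      {x : Fk | x ≠ 0 ∧ Algebra.trace Fq Ff (Algebra.norm Ff x) = 0}
        = (fun u : Fkˣ => (u : Fk)) '' ↑(Subgroup.zpowers (α ^ (q + 1)))) ∧
    (Odd q →
      {x : Fk | x ≠ 0 ∧ Algebra.trace Fq Ff (Algebra.norm Ff x) = 0}
        = (fun u : Fkˣ => ((α ^ ((q + 1) / 2) * u : Fkˣ) : Fk)) ''
            ↑(Subgroup.zpowers (α ^ (q + 1)))) := by
  have hp := (Fact.out : p.Prime)
  have hq2 : 2 ≤ q := by
    rw [hq]; exact hp.two_le.trans (Nat.le_self_pow he.ne' p)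
  have hfin : Module.finrank Fq Ff = 2 := by
    have h := Module.card_eq_pow_finrank (K := Fq) (V := Ff)
    rw [hcq, hcf] at h
    exact (Nat.pow_right_injective hq2 h).symm
  -- arithmetic
  obtain ⟨M, hM⟩ : q ^ 2 - 1 ∣ q ^ k - 1 := by
    obtain ⟨r, rfl⟩ := hke
    rw [← two_mul, pow_mul]
    exact Nat.sub_one_dvd_pow_sub_one _ _
  have hfac : q ^ 2 - 1 = (q + 1) * (q - 1) := by
    have := Nat.sq_sub_sq q 1
    simpa using this
  have hpos2 : 0 < q ^ 2 - 1 := by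
    rw [hfac]; exact Nat.mul_pos (by omega) (by omega)
  have hMd : (q ^ k - 1) / (q ^ 2 - 1) = M := by
    rw [hM]; exact Nat.mul_div_cancel_left _ hpos2
  have hNd : (q ^ k - 1) / (q + 1) = M * (q - 1) := by
    rw [hM, hfac, mul_assoc, Nat.mul_div_cancel_left _ (by omega), mul_comm]
  have hkpos : 0 < q ^ k - 1 := Nat.sub_pos_of_lt (Nat.one_lt_pow hk.ne' (by omega))
  have hMpos : 0 < M := by
    rcases Nat.eq_zero_or_pos M with h | h
    · rw [h] at hM; omega
    · exact h
  set N := M * (q - 1) with hNdef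
  have hNpos : 0 < N := Nat.mul_pos hMpos (by omega)
  have hNq : q ^ k - 1 = N * (q + 1) := by
    rw [hM, hfac, hNdef]; ring
  have hord : orderOf α = N * (q + 1) := by
    rw [orderOf_eq_card_of_forall_mem_zpowers hα, Nat.card_units, Nat.card_eq_fintype_card, hck, hNq]
  have key : ∀ x : Fk, x ≠ 0 →
      (Algebra.trace Fq Ff (Algebra.norm Ff x) = 0 ↔ x ^ N = -1) := by
    intro x hx
    have hy := hnorm x
    rw [hMd] at hy
    generalize Algebra.norm Ff x = y at hy
    have hy0 : y ≠ 0 := by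
      rintro rfl
      rw [map_zero] at hy
      exact pow_ne_zero M hx hy.symm
    have htr : algebraMap Fq Ff (Algebra.trace Fq Ff y) = y * (1 + y ^ (q - 1)) := by
      rw [FiniteField.algebraMap_trace_eq_sum_pow, hfin, Nat.card_eq_fintype_card, hcq]
      simp only [Finset.sum_range_succ, Finset.sum_range_zero, pow_zero, pow_one, zero_add]
      obtain ⟨t, rfl⟩ : ∃ t, q = t + 1 := ⟨q - 1, by omega⟩
      simp only [Nat.add_sub_cancel]
      ring
    rw [← map_eq_zero_iff _ (algebraMap Fq Ff).injective, htr, mul_eq_zero, or_iff_right hy0,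
      ← map_eq_zero_iff _ (algebraMap Ff Fk).injective, map_add, map_one, map_pow, hy, ← pow_mul,
      ← hNdef, add_comm, add_eq_zero_iff_eq_neg]
  have hu := pow_eq_one_iff_mem α hα N (q + 1) hNpos hord
  refine ⟨by rw [hNd]; exact key, ?_, ?_⟩
  · intro hev
    have h2 : (-1 : Fk) = 1 := by
      have h0 : ((q ^ k : ℕ) : Fk) = 0 := by rw [← hck]; exact Nat.cast_card_eq_zero Fk
      have hq0 : ((q : ℕ) : Fk) = 0 := by
        push_cast at h0
        exact eq_zero_of_pow_eq_zero h0
      have hp2 : p = 2 := by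
        rw [hq] at hev
        exact (hp.even_iff).1 ((Nat.even_pow.1 hev).1)
      rw [hq, hp2] at hq0
      push_cast at hq0
      have := eq_zero_of_pow_eq_zero hq0
      linear_combination -this
    ext x
    simp only [Set.mem_setOf_eq, Set.mem_image, SetLike.mem_coe]
    constructor
    · rintro ⟨hx, ht⟩
      rw [key x hx, h2] at ht
      refine ⟨Units.mk0 x hx, (hu _).1 ?_, rfl⟩
      ext; simpa using ht
    · rintro ⟨u, hm, rfl⟩
      refine ⟨u.ne_zero, (key _ u.ne_zero).2 ?_⟩
      rw [h2, ← Units.val_pow_eq_pow_val, (hu u).2 hm, Units.val_one]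
  · intro hodd
    obtain ⟨c, hc⟩ : ∃ c, q + 1 = 2 * c := by
      obtain ⟨t, ht⟩ := hodd
      exact ⟨t + 1, by omega⟩
    have hc2 : (q + 1) / 2 = c := by omega
    have hb : ((α ^ c) ^ N) = -1 := by
      have h1 : (α ^ c) ^ N * (α ^ c) ^ N = 1 := by
        rw [← pow_add, ← pow_mul, show c * (N + N) = N * (q + 1) by rw [hc]; ring, ← hord,
          pow_orderOf_eq_one]
      have hne : (α ^ c) ^ N ≠ 1 := by
        intro h
        rw [← pow_mul] at h
        have hd := Nat.le_of_dvd (Nat.mul_pos (by omega) hNpos) (orderOf_dvd_of_pow_eq_one h)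
        rw [hord, mul_comm c] at hd
        have := Nat.le_of_mul_le_mul_left hd hNpos
        omega
      have h1' := congrArg (Units.val) h1
      rw [Units.val_mul, Units.val_one] at h1'
      rcases mul_self_eq_one_iff.1 h1' with h | h
      · exact absurd (Units.ext h) hne
      · ext; simpa using h
    rw [hc2]
    ext x
    simp only [Set.mem_setOf_eq, Set.mem_image, SetLike.mem_coe]
    constructor
    · rintro ⟨hx, ht⟩
      rw [key x hx] at ht
      have hx' : (Units.mk0 x hx) ^ N = -1 := by ext; simpa using ht
      refine ⟨(α ^ c)⁻¹ * Units.mk0 x hx, (hu _).1 ?_, ?_⟩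
      · rw [mul_pow, inv_pow, hb, hx', inv_mul_cancel]
      · rw [mul_inv_cancel_left, Units.val_mk0]
    · rintro ⟨u, hm, rfl⟩
      refine ⟨Units.ne_zero _, (key _ (Units.ne_zero _)).2 ?_⟩
      rw [← Units.val_pow_eq_pow_val, mul_pow, hb, (hu u).2 hm, mul_one, Units.val_neg, Units.val_one]
end

section
/- Let q be a power of a prime p and let k, f be positive integers with f | k, f > 1 and gcd(k/f, q−1) = 1. Let χ, χ₁, χ₂ be the canonical additive characters of F_q, F_{q^f}, F_{q^k}, let a ∈ F_q^*, and for b ∈ F_{q^k} set Λ(b) = Σ_{x ∈ F_{q^k}} Σ_{y ∈ F_q^*} Σ_{z ∈ F_q^*} χ(ay) χ₁(y·x^{(q^k-1)/(q^f-1)}) χ₂(bzx). Let φ be a multiplicative character of F_{q^f}^* of order (q^f−1)/(q−1). Then for every b ∈ F_{q^k}^*: Λ(b) = q^f(1−q)/(q^f−1) − ((-1)^{k/f−1}(q−1)q^f/(q^f−1)) · Σ_{j=1}^{(q^f−1)/(q−1) − 1} φ^j(−1) G(φ^j, χ₁)^{k/f − 1} conj(φ^j)(b^{(q^k−1)/(q^f−1)}).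 -/
open scoped BigOperators

namespace HD
open Polynomial UniqueFactorizationMonoid

/-- The weight of a monic polynomial. -/
noncomputable def lam {K : Type} [Field K] (ψ : MulChar K ℂ) (χ : AddChar K ℂ) (g : K[X]) : ℂ :=
  ψ ((-1) ^ g.natDegree * g.coeff 0) * χ (-g.nextCoeff)

lemma lam_one {K : Type} [Field K] (ψ : MulChar K ℂ) (χ : AddChar K ℂ) : lam ψ χ 1 = 1 := by
  simp [lam, nextCoeff]

lemma lam_mul {K : Type} [Field K] (ψ : MulChar K ℂ) (χ : AddChar K ℂ) {g h : K[X]}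
    (hg : g.Monic) (hh : h.Monic) : lam ψ χ (g * h) = lam ψ χ g * lam ψ χ h := by
  unfold lam
  rw [hg.natDegree_mul hh, hg.nextCoeff_mul hh, mul_coeff_zero, neg_add, AddChar.map_add_eq_mul,
    pow_add, show (-1 : K) ^ g.natDegree * (-1) ^ h.natDegree * (g.coeff 0 * h.coeff 0)
      = ((-1) ^ g.natDegree * g.coeff 0) * ((-1) ^ h.natDegree * h.coeff 0) by ring, map_mul]
  ring

lemma lam_pow {K : Type} [Field K] (ψ : MulChar K ℂ) (χ : AddChar K ℂ) {g : K[X]}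
    (hg : g.Monic) (r : ℕ) : lam ψ χ (g ^ r) = lam ψ χ g ^ r := by
  induction r with
  | zero => simp [lam_one]
  | succ r ih => rw [pow_succ, lam_mul ψ χ (hg.pow r) hg, ih, pow_succ]

lemma finite_deg (K : Type) [Field K] [Finite K] (n : ℕ) : {g : K[X] | g.natDegree ≤ n}.Finite := by
  apply Set.Finite.of_finite_image (f := fun g : K[X] => fun i : Fin (n + 1) => g.coeff i)
  · exact Set.toFinite _
  · intro g hg h hh e
    simp only [Set.mem_ofPred_eq] at hg hh
    ext i
    by_cases hi : i < n + 1
    · exact congrFun e ⟨i, hi⟩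
    · rw [coeff_eq_zero_of_natDegree_lt (by omega), coeff_eq_zero_of_natDegree_lt (by omega)]

/-- Monic polynomials of degree `n`. -/
noncomputable def mon (K : Type) [Field K] [Finite K] (n : ℕ) : Finset K[X] :=
  ((Set.Finite.subset (finite_deg K n) (t := {g : K[X] | g.Monic ∧ g.natDegree = n})
    (fun _ hg => le_of_eq hg.2))).toFinset

/-- Monic irreducible polynomials of degree at most `n`. -/
noncomputable def irr (K : Type) [Field K] [Finite K] (n : ℕ) : Finset K[X] :=
  ((Set.Finite.subset (finite_deg K n) (t := {g : K[X] | g.Monic ∧ Irreducible g ∧ g.natDegree ≤ n})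
    (fun _ hg => hg.2.2))).toFinset

lemma mem_mon {K : Type} [Field K] [Finite K] {n : ℕ} {g : K[X]} :
    g ∈ mon K n ↔ g.Monic ∧ g.natDegree = n := by simp [mon]

lemma mem_irr {K : Type} [Field K] [Finite K] {n : ℕ} {g : K[X]} :
    g ∈ irr K n ↔ g.Monic ∧ Irreducible g ∧ g.natDegree ≤ n := by simp [irr]

open Classical in
lemma deg_eq {K : Type} [Field K] [Finite K] {N : ℕ} {g : K[X]} (hg : g.Monic)
    (hN : g.natDegree ≤ N) :
    g.natDegree = ∑ P ∈ irr K N, ∑ r ∈ Finset.Icc 1 N, if P ^ r ∣ g then P.natDegree else 0 := by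
  have h0 : g ≠ 0 := hg.ne_zero
  have hprod : (normalizedFactors g).prod = g := by
    rw [prod_normalizedFactors_eq h0, hg.normalize_eq_self]
  conv_lhs => rw [← hprod]
  rw [natDegree_multiset_prod_of_monic _
    (fun P hP => ((Polynomial.mem_normalizedFactors_iff h0).1 hP).2.1),
    Finset.sum_multiset_map_count]
  rw [Finset.sum_subset (s₂ := irr K N)]
  · refine Finset.sum_congr rfl fun P hP => ?_
    obtain ⟨hPm, hPi, hPd⟩ := mem_irr.1 hP
    have key : ∀ r, P ^ r ∣ g ↔ r ≤ (normalizedFactors g).count P := by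
      intro r
      rw [dvd_iff_normalizedFactors_le_normalizedFactors (pow_ne_zero _ hPm.ne_zero) h0,
        hPi.normalizedFactors_pow, hPm.normalize_eq_self, Multiset.le_count_iff_replicate_le]
    set c := (normalizedFactors g).count P with hc
    have hcN : c ≤ N := by
      have h1 := natDegree_le_of_dvd ((key c).2 le_rfl) h0
      rw [natDegree_pow] at h1
      have := hPi.natDegree_pos
      nlinarith
    rw [← Finset.sum_filter, Finset.sum_const]
    congr 1
    have : Finset.filter (fun r => P ^ r ∣ g) (Finset.Icc 1 N) = Finset.Icc 1 c := by
      ext r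
      simp only [Finset.mem_filter, Finset.mem_Icc, key]
      omega
    rw [this]; simp
  · intro P hP
    rw [Multiset.mem_toFinset, Polynomial.mem_normalizedFactors_iff h0] at hP
    exact mem_irr.2 ⟨hP.2.1, hP.1, (natDegree_le_of_dvd hP.2.2 h0).trans hN⟩
  · intro P _ hP
    rw [Multiset.mem_toFinset] at hP
    rw [Multiset.count_eq_zero_of_notMem hP, zero_smul]

/-- Sum of weights over monic polynomials of degree `n`. -/
noncomputable def asum {K : Type} [Field K] [Finite K] (ψ : MulChar K ℂ) (χ : AddChar K ℂ)
    (n : ℕ) : ℂ := ∑ g ∈ mon K n, lam ψ χ g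

lemma asum_zero {K : Type} [Field K] [Finite K] (ψ : MulChar K ℂ) (χ : AddChar K ℂ) :
    asum ψ χ 0 = 1 := by
  have : mon K 0 = {1} := by
    ext g
    rw [mem_mon, Finset.mem_singleton]
    constructor
    · rintro ⟨h1, h2⟩
      exact h1.natDegree_eq_zero.1 h2
    · rintro rfl
      exact ⟨monic_one, natDegree_one⟩
  rw [asum, this, Finset.sum_singleton, lam_one]

lemma asum_one {K : Type} [Field K] [Fintype K] (ψ : MulChar K ℂ) (χ : AddChar K ℂ) :
    asum ψ χ 1 = gaussSum ψ χ := by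
  rw [asum, gaussSum]
  symm
  refine Finset.sum_bij (fun c _ => X - C c) ?_ ?_ ?_ ?_
  · intro c _
    exact mem_mon.2 ⟨monic_X_sub_C c, natDegree_X_sub_C c⟩
  · intro c _ d _ h
    simpa using h
  · intro g hg
    obtain ⟨h1, h2⟩ := mem_mon.1 hg
    refine ⟨-g.coeff 0, Finset.mem_univ _, ?_⟩
    conv_rhs => rw [h1.eq_X_add_C h2]
    simp
  · intro c _
    simp [lam, nextCoeff_X_sub_C]

lemma asum_ge_two {K : Type} [Field K] [Finite K] (ψ : MulChar K ℂ) {χ : AddChar K ℂ}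
    (hχ : χ ≠ 1) {n : ℕ} (hn : 2 ≤ n) : asum ψ χ n = 0 := by
  obtain ⟨t, ht⟩ := (AddChar.ne_one_iff).1 hχ
  have hdeg : ∀ (s : K) (g : K[X]), g ∈ mon K n →
      (g + C s * X ^ (n - 1) ∈ mon K n) ∧ (g + C s * X ^ (n - 1)).nextCoeff = g.nextCoeff + s
        ∧ (g + C s * X ^ (n - 1)).coeff 0 = g.coeff 0 := by
    intro s g hg
    obtain ⟨h1, h2⟩ := mem_mon.1 hg
    have hlt : (C s * X ^ (n - 1)).degree < g.degree := by
      refine (degree_C_mul_X_pow_le _ _).trans_lt ?_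
      rw [degree_eq_natDegree h1.ne_zero, h2]
      exact_mod_cast (by omega : n - 1 < n)
    have hd : (g + C s * X ^ (n - 1)).natDegree = n := by
      rw [natDegree_add_eq_left_of_degree_lt hlt, h2]
    refine ⟨mem_mon.2 ⟨h1.add_of_left hlt, hd⟩, ?_, ?_⟩
    · rw [nextCoeff_of_natDegree_pos (by omega), nextCoeff_of_natDegree_pos (by omega), hd, h2]
      simp
    · simp [coeff_X_pow, show 0 ≠ n - 1 by omega]
  have h : asum ψ χ n = χ t * asum ψ χ n := by
    unfold asum
    rw [Finset.mul_sum]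
    refine Finset.sum_bij' (fun g _ => g + C t * X ^ (n - 1)) (fun g _ => g + C (-t) * X ^ (n - 1))
      (fun g hg => (hdeg t g hg).1) (fun g hg => (hdeg _ g hg).1) ?_ ?_ ?_
    · intro g _; simp
    · intro g _; simp
    · intro g hg
      obtain ⟨a1, a2, a3⟩ := hdeg t g hg
      unfold lam
      rw [(mem_mon.1 a1).2, (mem_mon.1 hg).2, a2, a3, neg_add, AddChar.map_add_eq_mul]
      have : χ t * χ (-t) = 1 := by rw [← AddChar.map_add_eq_mul]; simp
      linear_combination (-(ψ ((-1) ^ n * g.coeff 0) * χ (-g.nextCoeff))) * this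
  have h2 : (1 - χ t) * asum ψ χ n = 0 := by linear_combination h
  rcases mul_eq_zero.1 h2 with h3 | h3
  · exact absurd (by linear_combination -h3) ht
  · exact h3

/-- the power sums -/
noncomputable def ssum {K : Type} [Field K] [Finite K] (ψ : MulChar K ℂ) (χ : AddChar K ℂ)
    (N n : ℕ) : ℂ := ∑ P ∈ irr K N, ∑ r ∈ Finset.Icc 1 N,
      if r * P.natDegree = n then P.natDegree * lam ψ χ P ^ r else 0

open Classical in
lemma dvd_sum {K : Type} [Field K] [Finite K] (ψ : MulChar K ℂ) (χ : AddChar K ℂ)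
    (n r : ℕ) {P : K[X]} (hP : P.Monic) :
    (∑ g ∈ mon K n, if P ^ r ∣ g then lam ψ χ g else 0) =
      if r * P.natDegree ≤ n then lam ψ χ P ^ r * asum ψ χ (n - r * P.natDegree) else 0 := by
  have hPr := hP.pow r
  split_ifs with h
  · rw [asum, Finset.mul_sum, ← Finset.sum_filter]
    symm
    refine Finset.sum_bij (fun g _ => P ^ r * g) ?_ ?_ ?_ ?_
    · intro g hg
      obtain ⟨h1, h2⟩ := mem_mon.1 hg
      refine Finset.mem_filter.2 ⟨mem_mon.2 ⟨hPr.mul h1, ?_⟩, dvd_mul_right _ _⟩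
      rw [hPr.natDegree_mul h1, hP.natDegree_pow, h2]; omega
    · intro g _ g' _ e
      exact mul_left_cancel₀ hPr.ne_zero e
    · intro g hg
      obtain ⟨hg1, ⟨u, rfl⟩⟩ := Finset.mem_filter.1 hg
      obtain ⟨h1, h2⟩ := mem_mon.1 hg1
      have hu : u.Monic := hPr.of_mul_monic_left h1
      refine ⟨u, mem_mon.2 ⟨hu, ?_⟩, rfl⟩
      rw [hPr.natDegree_mul hu, hP.natDegree_pow] at h2; omega
    · intro g hg
      rw [lam_mul ψ χ hPr (mem_mon.1 hg).1, lam_pow ψ χ hP]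
  · refine Finset.sum_eq_zero fun g hg => if_neg fun hd => h ?_
    obtain ⟨h1, h2⟩ := mem_mon.1 hg
    have := natDegree_le_of_dvd hd h1.ne_zero
    rwa [hP.natDegree_pow, h2] at this

lemma newton {K : Type} [Field K] [Finite K] (ψ : MulChar K ℂ) (χ : AddChar K ℂ)
    {N n : ℕ} (hn : n ≤ N) :
    (n : ℂ) * asum ψ χ n = ∑ P ∈ irr K N, ∑ r ∈ Finset.Icc 1 N,
      if r * P.natDegree ≤ n then
        P.natDegree * (lam ψ χ P ^ r * asum ψ χ (n - r * P.natDegree)) else 0 := by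
  classical
  have : (n : ℂ) * asum ψ χ n = ∑ g ∈ mon K n, ∑ P ∈ irr K N, ∑ r ∈ Finset.Icc 1 N,
      (P.natDegree : ℂ) * if P ^ r ∣ g then lam ψ χ g else 0 := by
    rw [asum, Finset.mul_sum]
    refine Finset.sum_congr rfl fun g hg => ?_
    obtain ⟨h1, h2⟩ := mem_mon.1 hg
    have h3 := deg_eq h1 (h2.le.trans hn)
    rw [h2] at h3
    rw [h3]
    push_cast
    rw [Finset.sum_mul]
    refine Finset.sum_congr rfl fun P _ => ?_
    rw [Finset.sum_mul]
    refine Finset.sum_congr rfl fun r _ => ?_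
    split_ifs <;> simp
  rw [this, Finset.sum_comm]
  refine Finset.sum_congr rfl fun P hP => ?_
  rw [Finset.sum_comm]
  refine Finset.sum_congr rfl fun r _ => ?_
  rw [← Finset.mul_sum, dvd_sum ψ χ n r (mem_irr.1 hP).1]
  split_ifs <;> simp

lemma ssum_eq {K : Type} [Field K] [Fintype K] (ψ : MulChar K ℂ) {χ : AddChar K ℂ}
    (hχ : χ ≠ 1) (N n : ℕ) (hn : n + 1 ≤ N) :
    ssum ψ χ N (n + 1) = (-1) ^ n * gaussSum ψ χ ^ (n + 1) := by
  induction n with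
  | zero =>
    have h := newton ψ χ hn
    rw [zero_add, asum_one] at h
    rw [ssum]
    simp only [zero_add, pow_zero, one_mul, pow_one]
    rw [Nat.cast_one, one_mul] at h
    rw [h]
    refine Finset.sum_congr rfl fun P hP => Finset.sum_congr rfl fun r hr => ?_
    have h1 : 1 ≤ r * P.natDegree :=
      Nat.mul_pos (Finset.mem_Icc.1 hr).1 (mem_irr.1 hP).2.1.natDegree_pos
    by_cases h2 : r * P.natDegree = 1
    · rw [if_pos h2, if_pos h2.le, h2, asum_zero, mul_one]
    · rw [if_neg h2, if_neg (by omega)]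
  | succ n ih =>
    have h := newton ψ χ hn
    rw [asum_ge_two ψ hχ (by omega), mul_zero] at h
    have h3 : ssum ψ χ N (n + 1 + 1) + gaussSum ψ χ * ssum ψ χ N (n + 1) = 0 := by
      rw [h, ssum, ssum, Finset.mul_sum, ← Finset.sum_add_distrib]
      refine Finset.sum_congr rfl fun P hP => ?_
      rw [Finset.mul_sum, ← Finset.sum_add_distrib]
      refine Finset.sum_congr rfl fun r hr => ?_
      by_cases h2 : r * P.natDegree = n + 1 + 1
      · rw [if_pos h2, if_pos h2.le, if_neg (by omega), h2, Nat.sub_self, asum_zero]; ring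
      · by_cases h4 : r * P.natDegree = n + 1
        · rw [if_neg h2, if_pos h4, if_pos (by omega), h4, Nat.add_sub_cancel_left, asum_one]; ring
        · rw [if_neg h2, if_neg h4]
          split_ifs with h5
          · rw [asum_ge_two ψ hχ (by omega)]; ring
          · ring
    rw [ih (by omega)] at h3
    linear_combination h3

open Classical in
lemma lam_minpoly {K L : Type} [Field K] [Field L] [Finite K] [Finite L] [Algebra K L]
    (ψ : MulChar K ℂ) (χ : AddChar K ℂ) (x : L) :
    ψ (Algebra.norm K x) * χ (Algebra.trace K L x) =
      lam ψ χ (minpoly K x) ^ (Module.finrank K L / (minpoly K x).natDegree) := by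
  have hx : IsIntegral K x := IsIntegral.of_finite K x
  have hd : Module.finrank K L / (minpoly K x).natDegree =
      Module.finrank (IntermediateField.adjoin K {x}) L := by
    rw [← IntermediateField.adjoin.finrank hx,
      ← Module.finrank_mul_finrank K (IntermediateField.adjoin K {x}) L]
    exact Nat.mul_div_cancel_left _ Module.finrank_pos
  have hn := Algebra.PowerBasis.norm_gen_eq_coeff_zero_minpoly (IntermediateField.adjoin.powerBasis hx)
  have ht := PowerBasis.trace_gen_eq_nextCoeff_minpoly (IntermediateField.adjoin.powerBasis hx)
  rw [IntermediateField.adjoin.powerBasis_gen, IntermediateField.minpoly_gen] at hn ht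
  rw [IntermediateField.adjoin.powerBasis_dim] at hn
  rw [hd, Algebra.norm_eq_norm_adjoin K x, trace_eq_trace_adjoin K x, hn, ht, map_pow,
    AddChar.map_nsmul_eq_pow, ← mul_pow]
  rfl

lemma card_minpoly {K L : Type} [Field K] [Field L] [Fintype K] [Fintype L] [Algebra K L]
    {P : K[X]} (hP : P.Monic) (hi : Irreducible P) (hd : P.natDegree ∣ Module.finrank K L)
    [DecidablePred fun x : L => minpoly K x = P] :
    (Finset.univ.filter fun x : L => minpoly K x = P).card = P.natDegree := by
  classical
  have hspl : (P.map (algebraMap K L)).Splits := by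
    have h1 := hi.natDegree_dvd_iff_dvd_X_pow_card_pow_sub_X.1 hd
    rw [← Module.natCard_eq_pow_finrank] at h1
    have h2 := Polynomial.map_dvd (algebraMap K L) h1
    refine Splits.of_dvd ?_ ?_ h2
    · simp only [Polynomial.map_sub, Polynomial.map_pow, Polynomial.map_X]
      exact splits_X_pow_nat_card_sub_X
    · rw [Polynomial.map_ne_zero_iff (algebraMap K L).injective]
      exact FiniteField.X_pow_card_sub_X_ne_zero _ Finite.one_lt_card
  rw [← card_rootSet_eq_natDegree (PerfectField.separable_of_irreducible hi) hspl,
    ← Set.toFinset_card]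
  congr 1
  ext x
  simp only [Finset.mem_filter, Finset.mem_univ, true_and, Set.mem_toFinset,
    mem_rootSet, hP.ne_zero, ne_eq, not_false_eq_true]
  constructor
  · rintro rfl
    exact minpoly.aeval K x
  · intro h
    exact (minpoly.eq_of_irreducible_of_monic hi h hP).symm

/-- **Hasse–Davenport** lifting relation. -/
theorem hasse_davenport {K L : Type} [Field K] [Field L] [Fintype K] [Fintype L] [Algebra K L]
    (ψ : MulChar K ℂ) {χ : AddChar K ℂ} (hχ : χ ≠ 1) :
    ∑ x : L, ψ (Algebra.norm K x) * χ (Algebra.trace K L x) =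
      (-1) ^ (Module.finrank K L - 1) * gaussSum ψ χ ^ Module.finrank K L := by
  classical
  set m := Module.finrank K L with hm
  have hm0 : 0 < m := Module.finrank_pos
  obtain ⟨n, hn⟩ : ∃ n, m = n + 1 := ⟨m - 1, by omega⟩
  have h := ssum_eq ψ hχ m n hn.ge
  rw [← hn] at h
  rw [show m - 1 = n by omega, ← h, ssum]
  have hmem : ∀ x ∈ (Finset.univ : Finset L), minpoly K x ∈ irr K m := by
    intro x _
    have hx : IsIntegral K x := IsIntegral.of_finite K x
    exact mem_irr.2 ⟨minpoly.monic hx, minpoly.irreducible hx, minpoly.natDegree_le x⟩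
  rw [← Finset.sum_fiberwise_of_maps_to hmem]
  refine Finset.sum_congr rfl fun P hP => ?_
  obtain ⟨hPm, hPi, hPd⟩ := mem_irr.1 hP
  have hpos := hPi.natDegree_pos
  have h1 : ∀ x ∈ Finset.univ.filter (fun x : L => minpoly K x = P),
      ψ (Algebra.norm K x) * χ (Algebra.trace K L x) = lam ψ χ P ^ (m / P.natDegree) := by
    intro x hx
    rw [lam_minpoly, (Finset.mem_filter.1 hx).2]
  rw [Finset.sum_congr rfl h1, Finset.sum_const]
  by_cases hd : P.natDegree ∣ m
  · rw [card_minpoly hPm hPi hd, Finset.sum_eq_single (m / P.natDegree)]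
    · rw [if_pos (Nat.div_mul_cancel hd), nsmul_eq_mul]
    · intro r _ hr
      refine if_neg fun h2 => hr ?_
      rw [← h2, Nat.mul_div_cancel _ hpos]
    · intro h2
      exact absurd (Finset.mem_Icc.2 ⟨Nat.div_pos hPd hpos, Nat.div_le_self _ _⟩) h2
  · rw [Finset.card_eq_zero.2, zero_smul]
    · refine (Finset.sum_eq_zero fun r _ => if_neg fun h2 => hd ⟨r, ?_⟩).symm
      rw [← h2, mul_comm]
    · refine Finset.filter_eq_empty_iff.2 fun x _ hx => hd ?_
      rw [← hx]
      exact minpoly.degree_dvd (IsIntegral.of_finite K x)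

end HD

namespace HD

lemma canon_ne_one {p : ℕ} [Fact p.Prime] {F : Type} [Field F] [Finite F] [Algebra (ZMod p) F]
    {χ : AddChar F ℂ} (hχ : ∀ x : F, χ x =
      Complex.exp (2 * Real.pi * Complex.I * ((Algebra.trace (ZMod p) F x).val : ℂ) / p)) :
    χ ≠ 1 := by
  have hp : p.Prime := Fact.out
  have : Fact (1 < p) := ⟨hp.one_lt⟩
  obtain ⟨x, hx⟩ := Algebra.trace_surjective (ZMod p) F 1
  refine AddChar.ne_one_iff.2 ⟨x, ?_⟩
  rw [hχ, hx, ZMod.val_one, Nat.cast_one, mul_one]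
  exact (Complex.isPrimitiveRoot_exp p hp.ne_zero).ne_one hp.one_lt

lemma sum_units {F : Type} [Field F] [Fintype F] [DecidableEq F] (g : F → ℂ) (h0 : g 0 = 0) :
    ∑ u : Fˣ, g u = ∑ x : F, g x := by
  refine Finset.sum_bij_ne_zero (fun u _ _ => (u : F)) (fun _ _ _ => Finset.mem_univ _) ?_ ?_ ?_
  · intro u _ _ v _ _ h
    exact Units.ext h
  · intro x _ hx
    have : x ≠ 0 := fun h => hx (h ▸ h0)
    exact ⟨Units.mk0 x this, Finset.mem_univ _, hx, rfl⟩
  · intros; rfl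

lemma sum_mulChar {F : Type} [Field F] [Fintype F] [Fintype (MulChar F ℂ)] [DecidableEq F]
    (u : F) :
    ∑ ψ : MulChar F ℂ, ψ u = if u = 1 then (Fintype.card F : ℂ) - 1 else 0 := by
  split_ifs with h
  · subst h
    simp only [map_one, Finset.sum_const, Finset.card_univ, nsmul_eq_mul, mul_one]
    rw [← Nat.card_eq_fintype_card, MulChar.card_eq_card_units_of_hasEnoughRootsOfUnity,
      Nat.card_eq_fintype_card, Fintype.card_units, Nat.cast_sub Fintype.card_pos]
    simp
  · obtain ⟨ξ, hξ⟩ := MulChar.exists_apply_ne_one_of_hasEnoughRootsOfUnity F ℂ h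
    have h1 : ∑ ψ : MulChar F ℂ, (ξ * ψ) u = ∑ ψ : MulChar F ℂ, ψ u :=
      Fintype.sum_equiv (Equiv.mulLeft ξ) _ _ (fun _ => rfl)
    simp only [MulChar.mul_apply] at h1
    rw [← Finset.mul_sum] at h1
    have h2 : (ξ u - 1) * ∑ ψ : MulChar F ℂ, ψ u = 0 := by linear_combination h1
    exact (mul_eq_zero.1 h2).resolve_left (sub_ne_zero.2 hξ)

lemma fourier {F : Type} [Field F] [Fintype F] [Fintype (MulChar F ℂ)]
    (χ : AddChar F ℂ) {t : F} (ht : t ≠ 0) :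
    ((Fintype.card F : ℂ) - 1) * χ t = ∑ ψ : MulChar F ℂ, gaussSum ψ⁻¹ χ * ψ t := by
  classical
  simp only [gaussSum, Finset.sum_mul]
  rw [Finset.sum_comm]
  have : ∀ s : F, ∑ ψ : MulChar F ℂ, ψ⁻¹ s * χ s * ψ t =
      if s = t then ((Fintype.card F : ℂ) - 1) * χ s else 0 := by
    intro s
    have h1 : ∀ ψ : MulChar F ℂ, ψ⁻¹ s * χ s * ψ t = χ s * ψ (s⁻¹ * t) := by
      intro ψ
      rw [MulChar.inv_apply', map_mul]; ring
    simp only [h1]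
    rw [← Finset.mul_sum, sum_mulChar]
    by_cases hs : s = t
    · subst hs
      rw [if_pos (inv_mul_cancel₀ ht), if_pos rfl, mul_comm]
    · rw [if_neg hs, if_neg, mul_zero]
      intro h
      by_cases h0 : s = 0
      · simp [h0] at h
      · exact hs ((inv_mul_eq_one₀ h0).1 h)
  simp only [this]
  simp

lemma triv_iff {Fq Ff : Type} [Field Fq] [Field Ff] [Fintype Fq] [Fintype Ff] [Algebra Fq Ff]
    {n : ℕ} (hn : n = (Fintype.card Ff - 1) / (Fintype.card Fq - 1)) (ψ : MulChar Ff ℂ) :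
    ψ ^ n = 1 ↔ ∀ u : Fqˣ, ψ (algebraMap Fq Ff u) = 1 := by
  have key : ∀ w : Ffˣ, (ψ ^ n) w = ψ (algebraMap Fq Ff (Algebra.norm Fq (w : Ff))) := by
    intro w
    rw [MulChar.pow_apply_coe, FiniteField.algebraMap_norm_eq_pow, map_pow,
      Nat.card_eq_fintype_card, Nat.card_eq_fintype_card, hn]
  rw [MulChar.eq_one_iff]
  constructor
  · intro h u
    obtain ⟨w, hw⟩ := FiniteField.unitsMap_norm_surjective Fq Ff u
    rw [← hw, Units.coe_map]
    exact (key w).symm.trans (h w)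
  · intro h w
    rw [key]
    exact h (Units.map (Algebra.norm Fq) w)

lemma filter_eq {F : Type} [Field F] [Fintype F] [Fintype (MulChar F ℂ)]
    [DecidableEq (MulChar F ℂ)] (φ : MulChar F ℂ) :
    (Finset.univ.filter fun ψ : MulChar F ℂ => ψ ^ orderOf φ = 1) =
      (Finset.range (orderOf φ)).image (fun j => φ ^ j) := by
  classical
  have : IsCyclic (MulChar F ℂ) :=
    isCyclic_of_surjective (MulChar.mulEquiv_units F ℂ).some.symm
      (MulChar.mulEquiv_units F ℂ).some.symm.surjective
  symm
  apply Finset.eq_of_subset_of_card_le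
  · intro ψ hψ
    obtain ⟨j, _, rfl⟩ := Finset.mem_image.1 hψ
    simp only [Finset.mem_filter, Finset.mem_univ, true_and]
    rw [← pow_mul, mul_comm, pow_mul, pow_orderOf_eq_one, one_pow]
  · rw [Finset.card_image_of_injOn, Finset.card_range]
    · exact IsCyclic.card_pow_eq_one_le (orderOf_pos φ)
    · intro i hi j hj h
      exact pow_injOn_Iio_orderOf (by simpa using hi) (by simpa using hj) h

lemma sum_z {Fq Ff : Type} [Field Fq] [Field Ff] [Fintype Fq] [DecidableEq Fq] [Algebra Fq Ff]
    {m : ℕ} (hm : Nat.gcd m (Fintype.card Fq - 1) = 1) (ψ : MulChar Ff ℂ)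
    [Decidable (∀ u : Fqˣ, ψ (algebraMap Fq Ff u) = 1)] :
    ∑ z : Fqˣ, ψ⁻¹ (algebraMap Fq Ff (z : Fq) ^ m) =
      if ∀ u : Fqˣ, ψ (algebraMap Fq Ff u) = 1 then (Fintype.card Fq : ℂ) - 1 else 0 := by
  have e : ∀ z : Fqˣ, ψ⁻¹ (algebraMap Fq Ff (z : Fq)) = (ψ (algebraMap Fq Ff (z : Fq)))⁻¹ :=
    fun z => MulChar.inv_apply_eq_inv' ψ _
  split_ifs with h
  · simp only [map_pow, e, h, inv_one, one_pow, Finset.sum_const, Finset.card_univ, nsmul_eq_mul,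
      mul_one]
    rw [Fintype.card_units, Nat.cast_sub Fintype.card_pos]
    simp
  · push Not at h
    obtain ⟨u, hu⟩ := h
    -- u = v ^ m
    have hc : (Nat.card Fqˣ).Coprime m := by
      rw [Nat.card_eq_fintype_card, Fintype.card_units]
      exact Nat.Coprime.symm hm
    obtain ⟨v, hv⟩ := (powCoprime hc).surjective u
    rw [powCoprime_apply] at hv
    set g : Fqˣ → ℂ := fun z => ψ⁻¹ (algebraMap Fq Ff (z : Fq) ^ m) with hg
    have h1 : ∑ z, g (v * z) = ∑ z, g z :=
      Fintype.sum_equiv (Equiv.mulLeft v) _ _ (fun _ => rfl)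
    have h2 : ∀ z, g (v * z) = (ψ (algebraMap Fq Ff u))⁻¹ * g z := by
      intro z
      simp only [hg]
      rw [← e, ← hv, ← map_mul]
      congr 1
      push_cast
      simp [mul_pow]
    simp only [h2] at h1
    rw [← Finset.mul_sum] at h1
    have h3 : ((ψ (algebraMap Fq Ff u))⁻¹ - 1) * ∑ z, g z = 0 := by linear_combination h1
    refine (mul_eq_zero.1 h3).resolve_left (sub_ne_zero.2 fun h => hu ?_)
    exact inv_eq_one.1 h

/-- twisted Hasse–Davenport -/
lemma twisted {K L : Type} [Field K] [Field L] [Fintype K] [Fintype L] [Algebra K L]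
    (ψ : MulChar K ℂ) {χ : AddChar K ℂ} (hχ : χ ≠ 1) {c : L} (hc : c ≠ 0) :
    ∑ x : L, ψ (Algebra.norm K x) * χ (Algebra.trace K L (c * x)) =
      ψ⁻¹ (Algebra.norm K c) *
        ((-1) ^ (Module.finrank K L - 1) * gaussSum ψ χ ^ Module.finrank K L) := by
  rw [← hasse_davenport ψ hχ, Finset.mul_sum]
  refine Fintype.sum_equiv (Equiv.mulLeft₀ c hc) _ _ fun x => ?_
  have hN : Algebra.norm K c ≠ 0 := Algebra.norm_ne_zero_iff.2 hc
  have : ψ (Algebra.norm K c) ≠ 0 := by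
    rw [MulChar.apply_ne_zero_iff]; exact hN.isUnit
  simp only [Equiv.mulLeft₀_apply, map_mul]
  rw [MulChar.inv_apply_eq_inv']
  field_simp

lemma gauss_inv {K : Type} [Field K] [Fintype K] {ψ : MulChar K ℂ} (hψ : ψ ≠ 1)
    {χ : AddChar K ℂ} (hχ : χ ≠ 1) :
    gaussSum ψ⁻¹ χ * gaussSum ψ χ = ψ (-1) * Fintype.card K := by
  rw [← gaussSum_mul_gaussSum_eq_card hψ (AddChar.IsPrimitive.of_ne_one hχ),
    ← mul_gaussSum_inv_eq_gaussSum ψ⁻¹ χ, MulChar.inv_apply', inv_neg, inv_one]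
  ring

end HD

/-- **Lemma 6, case `f > 1`.** Let `q` be a power of a prime `p`, `f ∣ k`,
`f > 1`, `gcd(k/f, q-1) = 1`.  With `χ, χ₁, χ₂` the canonical additive characters of
`F_q, F_{q^f}, F_{q^k}`, `a ∈ F_qˣ`,
`Λ(b) = ∑_{x ∈ F_{q^k}} ∑_{y ∈ F_qˣ} ∑_{z ∈ F_qˣ} χ(ay) χ₁(y·x^{(q^k-1)/(q^f-1)}) χ₂(bzx)`,
and `φ` a multiplicative character of `F_{q^f}ˣ` of order `(q^f-1)/(q-1)`, we have for
every `b ∈ F_{q^k}ˣ`: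
`Λ(b) = q^f(1-q)/(q^f-1) − ((-1)^{k/f-1}(q-1)q^f/(q^f-1)) ·
  ∑_{j=1}^{(q^f-1)/(q-1)-1} φ^j(-1) G(φ^j,χ₁)^{k/f-1} conj(φ^j)(b^{(q^k-1)/(q^f-1)})`.
Here `x^{(q^k-1)/(q^f-1)}` is the norm from `Fk` to `Ff` (hypothesis `hnorm`). -/
theorem stmt10 (p e q f k : ℕ) [Fact p.Prime] (he : 0 < e) (hq : q = p ^ e)
    (hf : 1 < f) (hfk : f ∣ k) (hgcd : Nat.gcd (k / f) (q - 1) = 1)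
    (Fq Ff Fk : Type) [Field Fq] [Field Ff] [Field Fk]
    [Fintype Fq] [Fintype Ff] [Fintype Fk] [DecidableEq Fq]
    [Algebra Fq Ff] [Algebra Ff Fk] [Algebra Fq Fk] [IsScalarTower Fq Ff Fk]
    [Algebra (ZMod p) Fq] [Algebra (ZMod p) Ff] [Algebra (ZMod p) Fk]
    (hcq : Fintype.card Fq = q) (hcf : Fintype.card Ff = q ^ f)
    (hck : Fintype.card Fk = q ^ k)
    (hnorm : ∀ x : Fk,
      algebraMap Ff Fk (Algebra.norm Ff x) = x ^ ((q ^ k - 1) / (q ^ f - 1)))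
    (χ : AddChar Fq ℂ)
    (hχ : ∀ x : Fq, χ x =
      Complex.exp (2 * Real.pi * Complex.I * ((Algebra.trace (ZMod p) Fq x).val : ℂ) / p))
    (χ₁ : AddChar Ff ℂ)
    (hχ₁ : ∀ x : Ff, χ₁ x =
      Complex.exp (2 * Real.pi * Complex.I * ((Algebra.trace (ZMod p) Ff x).val : ℂ) / p))
    (χ₂ : AddChar Fk ℂ)
    (hχ₂ : ∀ x : Fk, χ₂ x =
      Complex.exp (2 * Real.pi * Complex.I * ((Algebra.trace (ZMod p) Fk x).val : ℂ) / p))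
    (φ : MulChar Ff ℂ) (hφ : orderOf φ = (q ^ f - 1) / (q - 1))
    (a : Fq) (ha : a ≠ 0) (b : Fk) (hb : b ≠ 0) :
    ∑ x : Fk, ∑ y : Fqˣ, ∑ z : Fqˣ,
        χ (a * y) * χ₁ (algebraMap Fq Ff (y : Fq) * Algebra.norm Ff x) *
          χ₂ (b * algebraMap Fq Fk (z : Fq) * x)
      = (q : ℂ) ^ f * (1 - q) / ((q : ℂ) ^ f - 1) -
        (-1 : ℂ) ^ (k / f - 1) * ((q : ℂ) - 1) * (q : ℂ) ^ f / ((q : ℂ) ^ f - 1) *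
          ∑ j ∈ Finset.Icc 1 ((q ^ f - 1) / (q - 1) - 1),
            (φ ^ j) (-1) * gaussSum (φ ^ j) χ₁ ^ (k / f - 1) *
              (starRingEnd ℂ) ((φ ^ j) (Algebra.norm Ff b)) := by
  classical
  have hp : p.Prime := Fact.out
  have hq2 : 2 ≤ q := by rw [← hcq]; exact Fintype.one_lt_card
  have hχ1 : χ ≠ 1 := HD.canon_ne_one hχ
  have hχ₁1 : χ₁ ≠ 1 := HD.canon_ne_one hχ₁
  have hst : IsScalarTower (ZMod p) Ff Fk :=
    IsScalarTower.of_algebraMap_eq' (Subsingleton.elim _ _)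
  have hχ₂' : ∀ x : Fk, χ₂ x = χ₁ (Algebra.trace Ff Fk x) := by
    intro x
    rw [hχ₂, hχ₁, Algebra.trace_trace]
  have hfin : Module.finrank Ff Fk = k / f := by
    have h := Module.card_eq_pow_finrank (K := Ff) (V := Fk)
    rw [hcf, hck, ← pow_mul] at h
    rw [Nat.pow_right_injective hq2 h, Nat.mul_div_cancel_left _ (by omega)]
  set m := k / f with hm
  have hm0 : 0 < m := by rw [← hfin]; exact Module.finrank_pos
  set n := (q ^ f - 1) / (q - 1) with hn
  have hn0 : 0 < n := by rw [← hφ]; exact MulChar.orderOf_pos φ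
  let _ : Fintype (MulChar Ff ℂ) := Fintype.ofFinite _
  have hQ1 : ((q : ℂ) ^ f - 1) ≠ 0 := by
    have : 1 < q ^ f := Nat.one_lt_pow (by omega) hq2
    rw [sub_ne_zero]
    exact_mod_cast this.ne'
  have hcfC : (Fintype.card Ff : ℂ) = (q : ℂ) ^ f := by rw [hcf]; push_cast; rfl
  -- sum over y
  have hy : ∑ y : Fqˣ, χ (a * (y : Fq)) = -1 := by
    have h1 : ∑ y : Fq, χ (a * y) = 0 := by
      rw [← AddChar.sum_eq_zero_of_ne_one hχ1]
      exact Fintype.sum_equiv (Equiv.mulLeft₀ a ha) _ _ (fun _ => rfl)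
    have h2 := HD.sum_units (F := Fq) (fun y => if y = 0 then 0 else χ (a * y)) (by simp)
    simp only [Units.ne_zero, if_false] at h2
    rw [h2]
    have h3 : ∀ y : Fq, (if y = 0 then 0 else χ (a * y)) = χ (a * y) - if y = 0 then 1 else 0 := by
      intro y
      split_ifs with h
      · simp [h]
      · simp
    simp only [h3]
    rw [Finset.sum_sub_distrib, h1]
    simp
  -- coefficient of a character
  set c : MulChar Ff ℂ → ℂ := fun ψ => gaussSum ψ⁻¹ χ₁ *
    (ψ⁻¹ (Algebra.norm Ff b) * ((-1) ^ (m - 1) * gaussSum ψ χ₁ ^ m)) with hc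
  have hS : ∀ y z : Fqˣ, ((q : ℂ) ^ f - 1) *
      ∑ x : Fk, (χ₁ (algebraMap Fq Ff (y : Fq) * Algebra.norm Ff x) *
          χ₂ (b * algebraMap Fq Fk (z : Fq) * x)) = ((q : ℂ) ^ f - 1) +
      ∑ ψ : MulChar Ff ℂ, c ψ * ψ (algebraMap Fq Ff (y : Fq)) *
        ψ⁻¹ (algebraMap Fq Ff (z : Fq) ^ m) := by
    intro y z
    have hyn : algebraMap Fq Ff (y : Fq) ≠ 0 := by simp
    have hbz : b * algebraMap Fq Fk (z : Fq) ≠ 0 := mul_ne_zero hb (by simp)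
    have hNz : Algebra.norm Ff (b * algebraMap Fq Fk (z : Fq)) =
        Algebra.norm Ff b * algebraMap Fq Ff (z : Fq) ^ m := by
      rw [map_mul, IsScalarTower.algebraMap_apply Fq Ff Fk, Algebra.norm_algebraMap, hfin]
    have hx : ∀ x : Fk, ((q : ℂ) ^ f - 1) *
        (χ₁ (algebraMap Fq Ff (y : Fq) * Algebra.norm Ff x) *
          χ₂ (b * algebraMap Fq Fk (z : Fq) * x)) =
        (if x = 0 then ((q : ℂ) ^ f - 1) else 0) +
        ∑ ψ : MulChar Ff ℂ, gaussSum ψ⁻¹ χ₁ * ψ (algebraMap Fq Ff (y : Fq)) *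
          (ψ (Algebra.norm Ff x) *
            χ₁ (Algebra.trace Ff Fk (b * algebraMap Fq Fk (z : Fq) * x))) := by
      intro x
      by_cases h0 : x = 0
      · subst h0
        have : Algebra.norm Ff (0 : Fk) = 0 := Algebra.norm_zero
        simp [this, MulChar.map_zero]
      · have hN : Algebra.norm Ff x ≠ 0 := Algebra.norm_ne_zero_iff.2 h0
        have h1 := HD.fourier χ₁ (mul_ne_zero hyn hN)
        rw [hcfC] at h1
        rw [if_neg h0, zero_add, ← mul_assoc, h1, Finset.sum_mul, hχ₂']
        refine Finset.sum_congr rfl fun ψ _ => ?_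
        rw [map_mul]
        ring
    rw [Finset.mul_sum, Finset.sum_congr rfl (fun x _ => hx x), Finset.sum_add_distrib,
      Finset.sum_comm]
    congr 1
    · simp
    · refine Finset.sum_congr rfl fun ψ _ => ?_
      rw [← Finset.mul_sum, HD.twisted ψ hχ₁1 hbz, hNz, hfin, map_mul]
      simp only [hc]
      ring
  have hcard : (Fintype.card Fq : ℂ) = q := by rw [hcq]
  have hzcard : ∑ z : Fqˣ, (1 : ℂ) = (q : ℂ) - 1 := by
    simp only [Finset.sum_const, Finset.card_univ, nsmul_eq_mul, mul_one]
    rw [Fintype.card_units, Nat.cast_sub Fintype.card_pos, hcard]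
    simp
  have htriv : ∀ ψ : MulChar Ff ℂ, ψ ^ n = 1 ↔ ∀ u : Fqˣ, ψ (algebraMap Fq Ff (u : Fq)) = 1 :=
    fun ψ => HD.triv_iff (by rw [hcf, hcq]) ψ
  have hzs : ∀ ψ : MulChar Ff ℂ, ∑ z : Fqˣ, ψ⁻¹ (algebraMap Fq Ff (z : Fq) ^ m) =
      if ψ ^ n = 1 then (q : ℂ) - 1 else 0 := by
    intro ψ
    rw [HD.sum_z (by rw [hcq]; exact hgcd) ψ, hcard]
    exact if_congr (htriv ψ).symm rfl rfl
  -- the sum of the coefficients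
  have hfilt : ∑ ψ : MulChar Ff ℂ, (if ψ ^ n = 1 then c ψ else 0) =
      1 + (-1) ^ (m - 1) * (q : ℂ) ^ f * ∑ j ∈ Finset.Icc 1 (n - 1),
            (φ ^ j) (-1) * gaussSum (φ ^ j) χ₁ ^ (m - 1) *
              (starRingEnd ℂ) ((φ ^ j) (Algebra.norm Ff b)) := by
    have hNb : Algebra.norm Ff b ≠ 0 := Algebra.norm_ne_zero_iff.2 hb
    rw [← Finset.sum_filter, ← hφ, HD.filter_eq φ, hφ, Finset.sum_image]
    · have hr : Finset.range n = insert 0 (Finset.Icc 1 (n - 1)) := by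
        ext j
        simp only [Finset.mem_range, Finset.mem_insert, Finset.mem_Icc]
        omega
      rw [hr, Finset.sum_insert (by simp)]
      congr 1
      · simp only [hc, pow_zero, inv_one]
        rw [gaussSum_one_left hχ₁1, MulChar.one_apply hNb.isUnit]
        obtain ⟨m', hm'⟩ : ∃ m', m = m' + 1 := ⟨m - 1, by omega⟩
        rw [hm', Nat.add_sub_cancel, pow_succ]
        have : ((-1 : ℂ) ^ m') * (-1) ^ m' = 1 := by rw [← mul_pow]; simp
        linear_combination this
      · rw [Finset.mul_sum]
        refine Finset.sum_congr rfl fun j hj => ?_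
        rw [Finset.mem_Icc] at hj
        have hne : φ ^ j ≠ 1 := by
          intro h
          have := Nat.le_of_dvd (by omega) (orderOf_dvd_of_pow_eq_one h)
          omega
        have hG := HD.gauss_inv hne hχ₁1
        rw [hcfC] at hG
        have hconj : (starRingEnd ℂ) ((φ ^ j) (Algebra.norm Ff b)) =
            (φ ^ j)⁻¹ (Algebra.norm Ff b) := by
          rw [← MulChar.star_eq_inv]; rfl
        rw [hconj]
        simp only [hc]
        obtain ⟨m', hm'⟩ : ∃ m', m = m' + 1 := ⟨m - 1, by omega⟩
        rw [hm', Nat.add_sub_cancel, pow_succ]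
        linear_combination ((φ ^ j)⁻¹ (Algebra.norm Ff b)) * (-1) ^ m' *
          gaussSum (φ ^ j) χ₁ ^ m' * hG
    · intro i hi j hj h
      refine pow_injOn_Iio_orderOf (x := φ) ?_ ?_ h
      · rw [hφ]; simpa using hi
      · rw [hφ]; simpa using hj
  have htot : ((q : ℂ) ^ f - 1) * (∑ x : Fk, ∑ y : Fqˣ, ∑ z : Fqˣ,
        χ (a * y) * χ₁ (algebraMap Fq Ff (y : Fq) * Algebra.norm Ff x) *
          χ₂ (b * algebraMap Fq Fk (z : Fq) * x)) =
      -((q : ℂ) - 1) * (((q : ℂ) ^ f - 1) +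
        ∑ ψ : MulChar Ff ℂ, (if ψ ^ n = 1 then c ψ else 0)) := by
    have e1 : (∑ x : Fk, ∑ y : Fqˣ, ∑ z : Fqˣ,
        χ (a * y) * χ₁ (algebraMap Fq Ff (y : Fq) * Algebra.norm Ff x) *
          χ₂ (b * algebraMap Fq Fk (z : Fq) * x)) =
        ∑ y : Fqˣ, ∑ z : Fqˣ, χ (a * y) *
          ∑ x : Fk, (χ₁ (algebraMap Fq Ff (y : Fq) * Algebra.norm Ff x) *
          χ₂ (b * algebraMap Fq Fk (z : Fq) * x)) := by
      rw [Finset.sum_comm]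
      refine Finset.sum_congr rfl fun y _ => ?_
      rw [Finset.sum_comm]
      refine Finset.sum_congr rfl fun z _ => ?_
      rw [Finset.mul_sum]
      refine Finset.sum_congr rfl fun x _ => ?_
      ring
    rw [e1, Finset.mul_sum]
    have e2 : ∀ y : Fqˣ, ((q : ℂ) ^ f - 1) * ∑ z : Fqˣ, χ (a * y) *
          ∑ x : Fk, (χ₁ (algebraMap Fq Ff (y : Fq) * Algebra.norm Ff x) *
          χ₂ (b * algebraMap Fq Fk (z : Fq) * x)) =
        χ (a * y) * (((q : ℂ) - 1) * (((q : ℂ) ^ f - 1) +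
          ∑ ψ : MulChar Ff ℂ, (if ψ ^ n = 1 then c ψ else 0))) := by
      intro y
      rw [← Finset.mul_sum, mul_left_comm, Finset.mul_sum]
      congr 1
      rw [Finset.sum_congr rfl (fun z _ => hS y z), Finset.sum_add_distrib, mul_add]
      congr 1
      · rw [← hzcard, Finset.sum_mul]
        simp
      · rw [Finset.sum_comm, Finset.mul_sum]
        refine Finset.sum_congr rfl fun ψ _ => ?_
        rw [← Finset.mul_sum, hzs ψ]
        split_ifs with h
        · rw [(htriv ψ).1 h y]; ring
        · ring
    rw [Finset.sum_congr rfl (fun y _ => e2 y), ← Finset.sum_mul, hy]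
    ring
  rw [hfilt] at htot
  rw [← mul_right_inj' hQ1, htot]
  field_simp
  ring
end

section
/- Let q be a power of a prime p, let k be an even positive integer with gcd(k/2, q−1) = 1, let a ∈ F_q^*, let χ, χ₁, χ₂ be the canonical additive characters of F_q, F_{q^2}, F_{q^k}, and for b ∈ F_{q^k} set Λ(b) = Σ_{x ∈ F_{q^k}} Σ_{y ∈ F_q^*} Σ_{z ∈ F_q^*} χ(ay) χ₁(y·x^{(q^k−1)/(q^2−1)}) χ₂(bzx). Then as b runs over F_{q^k}^*, Λ(b) takes the value (−q² + (−1)^{k/2} q^{k/2+2})/(q+1) exactly (q^k−1)/(q+1) times and the value (−q² + (−1)^{k/2−1} q^{k/2+1})/(q+1) exactly q(q^k−1)/(q+1) times. -/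
open scoped BigOperators

lemma aux_sum_pow {G : Type*} [CommGroup G] [IsCyclic G] [Fintype G] [DecidableEq G]
    (d n : ℕ) (h : Fintype.card G = d * n) (f : G → ℂ) :
    ∑ x : G, f (x ^ d) = d * ∑ u ∈ Finset.univ.filter (fun u : G => u ^ n = 1), f u := by
  have hpos : 0 < d * n := h ▸ Fintype.card_pos
  have hd : 0 < d := Nat.pos_of_mul_pos_right hpos
  have hn : 0 < n := Nat.pos_of_mul_pos_left hpos
  have hcard : Nat.card G = d * n := by rw [Nat.card_eq_fintype_card, h]
  have hle : (powMonoidHom d : G →* G).range ≤ (powMonoidHom n : G →* G).ker := by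
    rintro _ ⟨x, rfl⟩
    rw [MonoidHom.mem_ker]
    simp only [powMonoidHom_apply]
    rw [← pow_mul, ← h, pow_card_eq_one]
  have hrange : (powMonoidHom d : G →* G).range = (powMonoidHom n : G →* G).ker := by
    apply Subgroup.eq_of_le_of_card_ge hle
    rw [IsCyclic.card_powMonoidHom_range, IsCyclic.card_powMonoidHom_ker, hcard,
      Nat.gcd_mul_left_left, Nat.gcd_mul_right_left, Nat.mul_div_cancel_left _ hd]
  have hker : (Finset.univ.filter (fun x : G => x ^ d = 1)).card = d := by
    have := IsCyclic.card_powMonoidHom_ker (G := G) d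
    rw [hcard, Nat.gcd_mul_right_left] at this
    rw [Nat.card_eq_fintype_card, Fintype.card_subtype] at this
    refine Eq.trans (congrArg Finset.card ?_) this
    ext x
    simp [MonoidHom.mem_ker]
  rw [← Finset.sum_fiberwise_of_maps_to (s := Finset.univ)
    (t := Finset.univ.filter (fun u : G => u ^ n = 1)) (g := fun x : G => x ^ d), Finset.mul_sum]
  · refine Finset.sum_congr rfl fun u hu => ?_
    have hu' : u ∈ (powMonoidHom d : G →* G).range := by
      rw [hrange, MonoidHom.mem_ker]; simpa using hu
    obtain ⟨x0, hx0⟩ := hu'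
    have hfib : (Finset.univ.filter (fun x : G => x ^ d = u)).card = d := by
      conv_rhs => rw [← hker]
      refine Finset.card_bij (fun x _ => x * x0⁻¹) ?_ ?_ ?_
      · intro x hx
        simp only [powMonoidHom_apply] at hx0
        simp only [Finset.mem_filter, Finset.mem_univ, true_and] at hx ⊢
        rw [mul_pow, hx, inv_pow, hx0, mul_inv_cancel]
      · intro x _ y _ hxy
        exact mul_right_cancel hxy
      · intro y hy
        simp only [powMonoidHom_apply] at hx0
        simp only [Finset.mem_filter, Finset.mem_univ, true_and] at hy
        exact ⟨y * x0, by simp [mul_pow, hy, hx0], by simp⟩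
    rw [Finset.sum_congr rfl (g := fun _ => f u)
      (fun x hx => by rw [(Finset.mem_filter.mp hx).2])]
    rw [Finset.sum_const, hfib, nsmul_eq_mul]
  · intro x _
    simp only [Finset.mem_filter, Finset.mem_univ, true_and]
    rw [← pow_mul, ← h, pow_card_eq_one]

lemma aux_range {K L : Type*} [Field K] [Field L] [Fintype K] [Algebra K L] (x : L) :
    x ^ Fintype.card K = x ↔ ∃ a : K, algebraMap K L a = x := by
  classical
  constructor
  · intro hx
    have h1 : 1 < Fintype.card K := Fintype.one_lt_card
    set P : Polynomial L := Polynomial.X ^ Fintype.card K - Polynomial.X with hP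
    have hP0 : P ≠ 0 := FiniteField.X_pow_card_sub_X_ne_zero L h1
    have hroot : ∀ y : L, y ^ Fintype.card K = y ↔ y ∈ P.roots.toFinset := by
      intro y
      rw [Multiset.mem_toFinset, Polynomial.mem_roots hP0]
      simp [hP, sub_eq_zero]
    have hsub : Finset.univ.image (algebraMap K L) ⊆ P.roots.toFinset := by
      intro y hy
      obtain ⟨a, -, rfl⟩ := Finset.mem_image.mp hy
      rw [← hroot, ← map_pow, FiniteField.pow_card]
    have heq := Finset.eq_of_subset_of_card_le hsub (by
      rw [Finset.card_image_of_injective _ (algebraMap K L).injective, Finset.card_univ]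
      refine (Multiset.toFinset_card_le _).trans ((Polynomial.card_roots' P).trans ?_)
      rw [hP, FiniteField.X_pow_card_sub_X_natDegree_eq L h1])
    have := (hroot x).mp hx
    rw [← heq] at this
    obtain ⟨a, -, ha⟩ := Finset.mem_image.mp this
    exact ⟨a, ha⟩
  · rintro ⟨a, rfl⟩
    rw [← map_pow, FiniteField.pow_card]

section W
variable {F : Type*} [Field F] [Fintype F] [DecidableEq F]

lemma aux_sub {q : ℕ} (hadd : ∀ x y : F, (x + y) ^ q = x ^ q + y ^ q) (x y : F) :
    (x - y) ^ q = x ^ q - y ^ q := by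
  have := hadd (x - y) y
  rw [sub_add_cancel] at this
  rw [this]; ring

lemma aux_bij {q : ℕ} (hq : 2 ≤ q) (hadd : ∀ x y : F, (x + y) ^ q = x ^ q + y ^ q) :
    Function.Bijective (fun x : F => x ^ q) := by
  apply Function.Injective.bijective_of_finite
  intro x y hxy
  have h1 : (x - y) ^ q = 0 := by rw [aux_sub hadd]; exact sub_eq_zero.mpr hxy
  exact sub_eq_zero.mp (pow_eq_zero_iff (by omega) |>.mp h1)

lemma aux_WW (q : ℕ) (hq : 2 ≤ q)
    (hadd : ∀ x y : F, (x + y) ^ q = x ^ q + y ^ q)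
    (ψ : AddChar F ℂ) (hψ : ψ.IsPrimitive) (hfrob : ∀ x, ψ (x ^ q) = ψ x)
    (hneg : ∀ z : F, z ^ q = -z → ψ z = 1) (c : F) :
    (∑ x : F, ψ (c * x ^ (q + 1))) * (∑ x : F, ψ (-c * x ^ (q + 1))) =
      Fintype.card F *
        (Finset.univ.filter (fun u : F => c * u + c ^ q * u ^ (q ^ 2) = 0)).card := by
  have key : ∀ u : F, ∑ v : F, ψ (c * (v + u) ^ (q + 1)) * ψ (-c * v ^ (q + 1)) =
      if c * u + c ^ q * u ^ (q ^ 2) = 0 then (Fintype.card F : ℂ) else 0 := by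
    intro u
    have h1 : ∀ v : F, ψ (c * (v + u) ^ (q + 1)) * ψ (-c * v ^ (q + 1)) =
        ψ (c * u ^ (q + 1)) * ψ (v ^ q * (c * u + c ^ q * u ^ (q ^ 2))) := by
      intro v
      have e1 : ψ (v ^ q * (c * u + c ^ q * u ^ (q ^ 2))) =
          ψ (c * u * v ^ q) * ψ (c * u ^ q * v) := by
        rw [← hfrob (c * u ^ q * v), ← AddChar.map_add_eq_mul]
        congr 1
        rw [mul_pow, mul_pow, ← pow_mul, sq q]; ring
      rw [e1, ← AddChar.map_add_eq_mul, ← AddChar.map_add_eq_mul, ← AddChar.map_add_eq_mul]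
      congr 1
      rw [pow_succ, hadd]; ring
    simp_rw [h1]
    rw [← Finset.mul_sum,
      (aux_bij hq hadd).sum_comp (fun w => ψ (w * (c * u + c ^ q * u ^ (q ^ 2)))),
      AddChar.sum_mulShift _ hψ]
    split_ifs with h0
    · have : ψ (c * u ^ (q + 1)) = 1 := by
        apply hneg
        have : c ^ q * u ^ (q ^ 2) = - (c * u) := by linear_combination h0
        calc (c * u ^ (q + 1)) ^ q = c ^ q * u ^ (q ^ 2) * u ^ q := by
              rw [mul_pow, ← pow_mul]; ring
          _ = _ := by rw [this]; ring
      rw [this]; simp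
    · simp
  calc _ = ∑ v : F, ∑ x : F, ψ (c * x ^ (q + 1)) * ψ (-c * v ^ (q + 1)) := by
        rw [Finset.sum_mul_sum, Finset.sum_comm]
    _ = ∑ v : F, ∑ u : F, ψ (c * (v + u) ^ (q + 1)) * ψ (-c * v ^ (q + 1)) := by
        refine Finset.sum_congr rfl fun v _ => ?_
        exact (Equiv.sum_comp (Equiv.addLeft v)
          (fun x => ψ (c * x ^ (q + 1)) * ψ (-c * v ^ (q + 1)))).symm
    _ = ∑ u : F, if c * u + c ^ q * u ^ (q ^ 2) = 0 then (Fintype.card F : ℂ) else 0 := by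
        rw [Finset.sum_comm]
        exact Finset.sum_congr rfl fun u _ => key u
    _ = _ := by
        rw [← Finset.sum_filter, Finset.sum_const, nsmul_eq_mul, mul_comm]

lemma aux_ker (q : ℕ) (hq : 2 ≤ q)
    (hfix : (Finset.univ.filter (fun t : F => t ^ (q ^ 2) = t)).card = q ^ 2)
    (c : F) (hc : c ≠ 0) :
    (Finset.univ.filter (fun u : F => c * u + c ^ q * u ^ (q ^ 2) = 0)).card = 1 ∨
    (Finset.univ.filter (fun u : F => c * u + c ^ q * u ^ (q ^ 2) = 0)).card = q ^ 2 := by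
  by_cases h : ∃ u0 : F, u0 ≠ 0 ∧ c * u0 + c ^ q * u0 ^ (q ^ 2) = 0
  · right
    obtain ⟨u0, hu0, h0⟩ := h
    refine Eq.trans (Eq.symm ?_) hfix
    refine Finset.card_bij (fun t _ => u0 * t) ?_ ?_ ?_
    · intro t ht
      simp only [Finset.mem_filter, Finset.mem_univ, true_and] at ht ⊢
      rw [mul_pow, ht]
      linear_combination t * h0
    · intro x _ y _ hxy
      exact mul_left_cancel₀ hu0 hxy
    · intro u hu
      simp only [Finset.mem_filter, Finset.mem_univ, true_and] at hu
      refine ⟨u / u0, ?_, by field_simp⟩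
      simp only [Finset.mem_filter, Finset.mem_univ, true_and]
      have hcq : c ^ q ≠ 0 := pow_ne_zero _ hc
      have hu0q : u0 ^ (q ^ 2) ≠ 0 := pow_ne_zero _ hu0
      rw [div_pow, div_eq_div_iff hu0q hu0]
      apply mul_left_cancel₀ hcq
      linear_combination u0 * hu - u * h0
  · left
    push Not at h
    rw [Finset.card_eq_one]
    refine ⟨0, ?_⟩
    ext u
    simp only [Finset.mem_filter, Finset.mem_univ, true_and, Finset.mem_singleton]
    constructor
    · intro hu
      by_contra hne
      exact h u hne hu
    · rintro rfl
      have : q ^ 2 ≠ 0 := by positivity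
      simp [zero_pow this]

/-- sums over a field split into zero and units -/
lemma aux_units (f : F → ℂ) : ∑ x : F, f x = f 0 + ∑ x : Fˣ, f x := by
  rw [← Finset.add_sum_erase _ _ (Finset.mem_univ (0 : F))]
  congr 1
  symm
  refine Finset.sum_bij (fun x _ => (x : F)) ?_ ?_ ?_ ?_
  · intro x _; simp
  · intro x _ y _ h; exact Units.ext h
  · intro y hy
    exact ⟨Units.mk0 y (Finset.ne_of_mem_erase hy), Finset.mem_univ _, rfl⟩
  · intro x _; rfl

lemma aux_W_eta (q n : ℕ) (hn : Fintype.card F = (q + 1) * n + 1)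
    (ψ : AddChar F ℂ) (c : F) :
    ∑ x : F, ψ (c * x ^ (q + 1)) =
      1 + (q + 1) * ∑ u ∈ Finset.univ.filter (fun u : Fˣ => u ^ n = 1), ψ (c * u) := by
  rw [aux_units]
  have hcu : Fintype.card Fˣ = (q + 1) * n := by
    rw [Fintype.card_units, hn]; rfl
  have := aux_sum_pow (G := Fˣ) (q + 1) n hcu (fun u => ψ (c * u))
  push_cast at this
  rw [this]
  simp

lemma aux_W_neg (q n : ℕ) (hn : Fintype.card F = (q + 1) * n + 1)
    (hn2 : (-1 : F) ^ n = 1)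
    (ψ : AddChar F ℂ) (c : F) :
    ∑ x : F, ψ (-c * x ^ (q + 1)) = ∑ x : F, ψ (c * x ^ (q + 1)) := by
  rw [aux_W_eta q n hn, aux_W_eta q n hn]
  congr 2
  refine Finset.sum_bij (fun u _ => -u) ?_ ?_ ?_ ?_
  · intro u hu
    simp only [Finset.mem_filter, Finset.mem_univ, true_and] at hu ⊢
    rw [neg_pow, hu, mul_one]
    ext; simpa using hn2
  · intro x _ y _ h; exact neg_injective h
  · intro u hu
    refine ⟨-u, ?_, by simp⟩
    simp only [Finset.mem_filter, Finset.mem_univ, true_and] at hu ⊢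
    rw [neg_pow, hu, mul_one]
    ext; simpa using hn2
  · intro u _; simp

lemma aux_int (q j : ℕ) (hq : 2 ≤ q) (ε : ℤ) (hε : ε = 1 ∨ ε = -1)
    (h : ((q : ℤ) + 1) ∣ ε * q ^ j - 1) : ε = (-1) ^ j := by
  have h1 : ((q : ℤ) + 1) ∣ (q : ℤ) ^ j - (-1) ^ j := by
    have := sub_dvd_pow_sub_pow (q : ℤ) (-1) j
    rwa [sub_neg_eq_add] at this
  have h2 : ((q : ℤ) + 1) ∣ ε * (-1) ^ j - 1 := by
    have := dvd_sub h (h1.mul_left ε)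
    have e : ε * (q:ℤ) ^ j - 1 - ε * ((q:ℤ) ^ j - (-1) ^ j) = ε * (-1) ^ j - 1 := by ring
    rwa [e] at this
  rcases hε with rfl | rfl <;> rcases neg_one_pow_eq_or ℤ j with h3 | h3 <;> rw [h3] at h2 ⊢
  · exfalso
    have := Int.le_of_dvd (a := (q:ℤ)+1) (b := 2) (by norm_num) (by simpa using (dvd_neg.mpr h2))
    omega
  · exfalso
    have := Int.le_of_dvd (a := (q:ℤ)+1) (b := 2) (by norm_num) (by simpa using (dvd_neg.mpr h2))
    omega

lemma aux_W_value (q m n : ℕ) (hq : 2 ≤ q) (hcard : Fintype.card F = q ^ (2 * m))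
    (hn : Fintype.card F = (q + 1) * n + 1) (hn2 : (-1 : F) ^ n = 1)
    (hadd : ∀ x y : F, (x + y) ^ q = x ^ q + y ^ q)
    (hfix : (Finset.univ.filter (fun t : F => t ^ (q ^ 2) = t)).card = q ^ 2)
    (ψ : AddChar F ℂ) (hψ : ψ.IsPrimitive) (hfrob : ∀ x, ψ (x ^ q) = ψ x)
    (hneg : ∀ z : F, z ^ q = -z → ψ z = 1) (c : F) (hc : c ≠ 0) :
    ∑ x : F, ψ (c * x ^ (q + 1)) = (-1) ^ m * q ^ m ∨
    ∑ x : F, ψ (c * x ^ (q + 1)) = (-1) ^ (m + 1) * q ^ (m + 1) := by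
  have hint : ∀ x, IsIntegral ℤ (ψ x) := by
    intro x
    apply IsIntegral.of_pow (n := Fintype.card F) Fintype.card_pos
    rw [← AddChar.map_nsmul_eq_pow]
    have : Fintype.card F • x = 0 := card_nsmul_eq_zero
    rw [this, AddChar.map_zero_eq_one]
    exact isIntegral_one
  have hWW := aux_WW q hq hadd ψ hψ hfrob hneg c
  rw [aux_W_neg q n hn hn2] at hWW
  have hη := aux_W_eta q n hn ψ c
  set W := ∑ x : F, ψ (c * x ^ (q + 1)) with hW
  set η := ∑ u ∈ Finset.univ.filter (fun u : Fˣ => u ^ n = 1), ψ (c * u) with hηdef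
  have hηint : IsIntegral ℤ η := IsIntegral.sum _ fun u _ => hint _
  have main : ∀ j : ℕ, W * W = (q : ℂ) ^ j * q ^ j → W = (-1) ^ j * q ^ j := by
    intro j hj
    have h1 : ∃ ε : ℤ, (ε = 1 ∨ ε = -1) ∧ W = ε * q ^ j := by
      rcases mul_self_eq_mul_self_iff.mp hj with h | h
      · exact ⟨1, Or.inl rfl, by simpa using h⟩
      · exact ⟨-1, Or.inr rfl, by simpa using h⟩
    obtain ⟨ε, hε, hWε⟩ := h1
    have hq1 : (q : ℂ) + 1 ≠ 0 := by exact_mod_cast Nat.succ_ne_zero q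
    have hq1' : (q : ℚ) + 1 ≠ 0 := by positivity
    have hηr : η = algebraMap ℚ ℂ ((ε * q ^ j - 1) / (q + 1)) := by
      have : η = (ε * q ^ j - 1) / (q + 1) := by
        rw [eq_div_iff hq1]; linear_combination hWε - hη
      rw [this]; simp
    rw [hηr] at hηint
    have h2 := (isIntegral_algebraMap_iff (algebraMap ℚ ℂ).injective).mp hηint
    obtain ⟨N, hN⟩ := IsIntegrallyClosed.isIntegral_iff.mp h2
    have h3 : ((q : ℤ) + 1) ∣ ε * q ^ j - 1 := by
      refine ⟨N, ?_⟩
      have h4 : ((ε : ℚ) * q ^ j - 1) = (q + 1) * N := by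
        have : (N : ℚ) = (ε * q ^ j - 1) / (q + 1) := by simpa using hN
        rw [this]; field_simp
      exact_mod_cast h4
    rw [hWε, aux_int q j hq ε hε h3]; push_cast; rfl
  rw [hcard] at hWW
  rcases aux_ker q hq hfix c hc with hk | hk <;> rw [hk] at hWW <;> push_cast at hWW
  · left; apply main; rw [hWW]; ring
  · right; apply main; rw [hWW]; ring

lemma aux_count (q m : ℕ) (hq : 2 ≤ q) (hcard : Fintype.card F = q ^ (2 * m))
    (ψ : AddChar F ℂ) (hψ : ψ.IsPrimitive)
    (hval : ∀ c : F, c ≠ 0 → ∑ x : F, ψ (c * x ^ (q + 1)) = (-1) ^ m * q ^ m ∨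
      ∑ x : F, ψ (c * x ^ (q + 1)) = (-1) ^ (m + 1) * q ^ (m + 1)) :
    (Nat.card {c : F // c ≠ 0 ∧ ∑ x : F, ψ (c * x ^ (q + 1)) = (-1) ^ (m + 1) * q ^ (m + 1)} : ℂ)
      = ((q : ℂ) ^ (2 * m) - 1) / (q + 1) ∧
    (Nat.card {c : F // c ≠ 0 ∧ ∑ x : F, ψ (c * x ^ (q + 1)) = (-1) ^ m * q ^ m} : ℂ)
      = q * ((q : ℂ) ^ (2 * m) - 1) / (q + 1) := by
  set W : F → ℂ := fun c => ∑ x : F, ψ (c * x ^ (q + 1)) with hW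
  set A : ℂ := (-1) ^ m * q ^ m with hA
  set B : ℂ := (-1) ^ (m + 1) * q ^ (m + 1) with hB
  have hBA : B = - q * A := by rw [hA, hB]; ring
  have hq1 : (q : ℂ) + 1 ≠ 0 := by exact_mod_cast Nat.succ_ne_zero q
  have hA0 : A ≠ 0 := by
    rw [hA]
    have : (q : ℂ) ≠ 0 := by norm_cast; omega
    have h2 : (-1 : ℂ) ≠ 0 := by norm_num
    positivity
  have hAB : A ≠ B := by
    intro h
    rw [hBA] at h
    have : A * (q + 1) = 0 := by linear_combination h
    rcases mul_eq_zero.mp this with h | h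
    · exact hA0 h
    · exact hq1 h
  have hsum : ∑ c : F, W c = q ^ (2 * m) := by
    rw [hW]; simp only
    rw [Finset.sum_comm]
    have : ∀ x : F, ∑ c : F, ψ (c * x ^ (q + 1)) = if x = 0 then ((q ^ (2 * m) : ℕ) : ℂ) else 0 := by
      intro x
      rw [AddChar.sum_mulShift _ hψ, hcard]
      simp
    simp_rw [this]
    simp
  have hW0 : W 0 = q ^ (2 * m) := by
    simp [hW, hcard]
  rw [← Finset.add_sum_erase _ _ (Finset.mem_univ (0 : F)), hW0] at hsum
  have hsum0 : ∑ c ∈ Finset.univ.erase (0 : F), W c = 0 := by linear_combination hsum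
  set S := Finset.univ.erase (0 : F) with hS
  have hScard : (S.card : ℂ) = (q : ℂ) ^ (2 * m) - 1 := by
    rw [hS, Finset.card_erase_of_mem (Finset.mem_univ _), Finset.card_univ, hcard,
      Nat.cast_sub (Nat.one_le_pow _ _ (by omega))]
    push_cast; rfl
  have hnotA : S.filter (fun c => ¬ W c = A) = S.filter (fun c => W c = B) := by
    apply Finset.filter_congr
    intro c hc
    have := hval c (Finset.ne_of_mem_erase hc)
    constructor
    · intro h; exact this.resolve_left h
    · intro h h'; exact hAB (h'.symm.trans h)
  have hc1 := Finset.card_filter_add_card_filter_not (s := S) (fun c => W c = A)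
  rw [hnotA] at hc1
  have hs1 := Finset.sum_filter_add_sum_filter_not S (fun c => W c = A) W
  rw [hnotA, hsum0, Finset.sum_congr rfl (g := fun _ => A)
      (fun x hx => (Finset.mem_filter.mp hx).2), Finset.sum_congr (s₁ := S.filter (fun c => W c = B)) rfl (g := fun _ => B)
      (fun x hx => (Finset.mem_filter.mp hx).2), Finset.sum_const, Finset.sum_const,
      nsmul_eq_mul, nsmul_eq_mul] at hs1
  have hN : ∀ C : ℂ, Nat.card {c : F // c ≠ 0 ∧ W c = C} = (S.filter (fun c => W c = C)).card := by
    intro C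
    rw [Nat.card_eq_fintype_card, Fintype.card_subtype]
    congr 1
    ext c
    simp [hS]
  have hN' := hN A
  have hN'' := hN B
  rw [hN A, hN B]
  have hc2 : ((S.filter (fun c => W c = A)).card : ℂ) + (S.filter (fun c => W c = B)).card
      = (q : ℂ) ^ (2 * m) - 1 := by
    rw [← hScard, ← hc1]; push_cast; rfl
  generalize ((S.filter (fun c => W c = A)).card : ℂ) = n1 at *
  generalize ((S.filter (fun c => W c = B)).card : ℂ) = n2 at *
  have h12 : n1 = q * n2 := by
    rw [hBA] at hs1
    apply mul_right_cancel₀ hA0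
    linear_combination hs1
  rw [h12] at hc2
  constructor
  · rw [eq_div_iff hq1]; linear_combination hc2
  · rw [h12, eq_div_iff hq1]; linear_combination q * hc2
end W

lemma aux_prim {p : ℕ} [Fact p.Prime] {F : Type*} [Field F] [Fintype F] [Algebra (ZMod p) F]
    (χ : AddChar F ℂ)
    (hχ : ∀ x : F, χ x =
      Complex.exp (2 * Real.pi * Complex.I * ((Algebra.trace (ZMod p) F x).val : ℂ) / p)) :
    χ.IsPrimitive := by
  apply AddChar.IsPrimitive.of_ne_one
  intro h
  obtain ⟨x, hx⟩ := Algebra.trace_surjective (ZMod p) F 1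
  have h1 := hχ x
  have hp1 : 1 < p := (Fact.out : p.Prime).one_lt
  haveI : Fact (1 < p) := ⟨hp1⟩
  rw [h, hx, ZMod.val_one] at h1
  have h2 := (Complex.isPrimitiveRoot_exp p (by omega)).ne_one hp1
  apply h2
  simp only [AddChar.one_apply, Nat.cast_one, mul_one] at h1
  exact h1.symm

lemma aux_gsum {q m : ℕ} (hq2 : 2 ≤ q) (hm : 0 < m)
    (hgcd : Nat.gcd m (q - 1) = 1)
    (Fq Ff Fk : Type) [Field Fq] [Field Ff] [Field Fk]
    [Fintype Fq] [Fintype Ff] [Fintype Fk] [DecidableEq Fq] [DecidableEq Fk]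
    [Algebra Fq Ff] [Algebra Ff Fk] [Algebra Fq Fk] [IsScalarTower Fq Ff Fk]
    (hcq : Fintype.card Fq = q)
    (hfr : Module.finrank Ff Fk = m)
    (χ : AddChar Fq ℂ) (hχ : χ.IsPrimitive)
    (χ₁ : AddChar Ff ℂ) (hχ₁ : ∀ x, χ₁ x = χ (Algebra.trace Fq Ff x))
    (χ₂ : AddChar Fk ℂ) (hχ₂ : χ₂.IsPrimitive)
    (a : Fq) (ha : a ≠ 0) (b : Fk) (hb : b ≠ 0) :
    (∑ x : Fk, ∑ y : Fqˣ, ∑ z : Fqˣ,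
            χ (a * y) * χ₁ (algebraMap Fq Ff (y : Fq) * Algebra.norm Ff x) *
              χ₂ (b * algebraMap Fq Fk (z : Fq) * x)) =
     - q * ∑ x : Fk, if Algebra.trace Fq Ff (Algebra.norm Ff x) = 0 then χ₂ (b * x) else 0 := by
  have hunit : ∀ t : Fq, ∑ w : Fqˣ, χ (w * t) = (if t = 0 then (q : ℂ) else 0) - 1 := by
    intro t
    have h1 := aux_units (fun w : Fq => χ (w * t))
    rw [AddChar.sum_mulShift _ hχ, hcq] at h1
    simp only [zero_mul, AddChar.map_zero_eq_one] at h1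
    push_cast at h1
    rw [h1]; ring
  have hco : (Nat.card Fqˣ).Coprime m := by
    rw [Nat.card_eq_fintype_card, Fintype.card_units, hcq, Nat.coprime_comm]; exact hgcd
  set G : Fqˣ → ℂ := fun w => ∑ x : Fk, χ₁ (algebraMap Fq Ff (w : Fq) * Algebra.norm Ff x) *
    χ₂ (b * x) with hG
  have hz : ∀ y z : Fqˣ, ∑ x : Fk, χ (a * y) * χ₁ (algebraMap Fq Ff (y : Fq) * Algebra.norm Ff x) *
              χ₂ (b * algebraMap Fq Fk (z : Fq) * x) = χ (a * y) * G (y * (z⁻¹) ^ m) := by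
    intro y z
    have hz0 : algebraMap Fq Fk (z : Fq) ≠ 0 := by simp
    rw [hG]; simp only
    rw [← Equiv.sum_comp (Equiv.mulLeft₀ _ hz0) (fun x => χ₁ (algebraMap Fq Ff ((y * z⁻¹ ^ m : Fqˣ) : Fq) * Algebra.norm Ff x) *
      χ₂ (b * x)), Finset.mul_sum]
    refine Finset.sum_congr rfl fun x _ => ?_
    rw [mul_assoc]
    congr 2
    · congr 1
      simp only [Equiv.mulLeft₀_apply, map_mul]
      rw [IsScalarTower.algebraMap_apply Fq Ff Fk, Algebra.norm_algebraMap, hfr]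
      simp only [Units.val_mul, Units.val_pow_eq_pow_val, map_mul, map_pow]
      have : algebraMap Fq Ff ((z⁻¹ : Fqˣ) : Fq) ^ m * algebraMap Fq Ff (z : Fq) ^ m = 1 := by
        rw [← mul_pow, ← map_mul]; simp
      linear_combination (- algebraMap Fq Ff (y : Fq) * Algebra.norm Ff x) * this
    · congr 1
      simp only [Equiv.mulLeft₀_apply]; ring
  have hzz : ∀ y : Fqˣ, ∑ z : Fqˣ, G (y * (z⁻¹) ^ m) = ∑ w : Fqˣ, G w := by
    intro y
    exact Equiv.sum_comp (((Equiv.inv Fqˣ).trans (powCoprime hco)).trans (Equiv.mulLeft y)) G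
  have hGs : ∑ w : Fqˣ, G w =
      q * ∑ x : Fk, if Algebra.trace Fq Ff (Algebra.norm Ff x) = 0 then χ₂ (b * x) else 0 := by
    rw [hG]; simp only
    rw [Finset.sum_comm]
    have : ∀ x : Fk, ∑ w : Fqˣ, χ₁ (algebraMap Fq Ff (w : Fq) * Algebra.norm Ff x) * χ₂ (b * x) =
        q * (if Algebra.trace Fq Ff (Algebra.norm Ff x) = 0 then χ₂ (b * x) else 0) - χ₂ (x * b) := by
      intro x
      rw [← Finset.sum_mul]
      have h2 : ∀ w : Fqˣ, χ₁ (algebraMap Fq Ff (w : Fq) * Algebra.norm Ff x) =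
          χ (w * Algebra.trace Fq Ff (Algebra.norm Ff x)) := by
        intro w
        rw [hχ₁, ← Algebra.smul_def, map_smul, smul_eq_mul]
      simp_rw [h2]
      rw [hunit, mul_comm x b]
      split_ifs <;> ring
    simp_rw [this]
    rw [Finset.sum_sub_distrib, AddChar.sum_mulShift _ hχ₂, if_neg hb, Finset.mul_sum]
    simp
  have h3 : ∑ y : Fqˣ, χ (a * y) = -1 := by
    have := hunit a
    rw [if_neg ha] at this
    simp_rw [mul_comm a]
    rw [this]; ring
  calc _ = ∑ y : Fqˣ, ∑ z : Fqˣ, ∑ x : Fk, χ (a * y) * χ₁ (algebraMap Fq Ff (y : Fq) * Algebra.norm Ff x) *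
              χ₂ (b * algebraMap Fq Fk (z : Fq) * x) := by
        rw [Finset.sum_comm]
        exact Finset.sum_congr rfl fun y _ => Finset.sum_comm
    _ = _ := by
        simp_rw [hz, ← Finset.mul_sum, hzz]
        rw [← Finset.sum_mul, h3, hGs]; ring


/-- **Lemma 8.** Let `q` be a power of a prime `p`, `k` even positive with
`gcd(k/2, q-1) = 1`, `a ∈ F_qˣ`, and `χ, χ₁, χ₂` the canonical additive characters of
`F_q, F_{q²}, F_{q^k}`.  With
`Λ(b) = ∑_{x ∈ F_{q^k}} ∑_{y ∈ F_qˣ} ∑_{z ∈ F_qˣ} χ(ay) χ₁(y·x^{(q^k-1)/(q²-1)}) χ₂(bzx)`,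
as `b` runs over `F_{q^k}ˣ`, `Λ(b)` takes the value `(−q² + (−1)^{k/2} q^{k/2+2})/(q+1)`
exactly `(q^k−1)/(q+1)` times and the value `(−q² + (−1)^{k/2−1} q^{k/2+1})/(q+1)`
exactly `q(q^k−1)/(q+1)` times.
Here `x^{(q^k-1)/(q²-1)}` is the norm from `Fk` to `Ff` (hypothesis `hnorm`). -/
theorem stmt12 (p e q k : ℕ) [Fact p.Prime] (he : 0 < e) (hq : q = p ^ e)
    (hk : 0 < k) (hke : Even k) (hgcd : Nat.gcd (k / 2) (q - 1) = 1)
    (Fq Ff Fk : Type) [Field Fq] [Field Ff] [Field Fk]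
    [Fintype Fq] [Fintype Ff] [Fintype Fk] [DecidableEq Fq]
    [Algebra Fq Ff] [Algebra Ff Fk] [Algebra Fq Fk] [IsScalarTower Fq Ff Fk]
    [Algebra (ZMod p) Fq] [Algebra (ZMod p) Ff] [Algebra (ZMod p) Fk]
    (hcq : Fintype.card Fq = q) (hcf : Fintype.card Ff = q ^ 2)
    (hck : Fintype.card Fk = q ^ k)
    (hnorm : ∀ x : Fk,
      algebraMap Ff Fk (Algebra.norm Ff x) = x ^ ((q ^ k - 1) / (q ^ 2 - 1)))
    (χ : AddChar Fq ℂ)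
    (hχ : ∀ x : Fq, χ x =
      Complex.exp (2 * Real.pi * Complex.I * ((Algebra.trace (ZMod p) Fq x).val : ℂ) / p))
    (χ₁ : AddChar Ff ℂ)
    (hχ₁ : ∀ x : Ff, χ₁ x =
      Complex.exp (2 * Real.pi * Complex.I * ((Algebra.trace (ZMod p) Ff x).val : ℂ) / p))
    (χ₂ : AddChar Fk ℂ)
    (hχ₂ : ∀ x : Fk, χ₂ x =
      Complex.exp (2 * Real.pi * Complex.I * ((Algebra.trace (ZMod p) Fk x).val : ℂ) / p))
    (a : Fq) (ha : a ≠ 0) :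
    (Nat.card {b : Fk // b ≠ 0 ∧
        (∑ x : Fk, ∑ y : Fqˣ, ∑ z : Fqˣ,
            χ (a * y) * χ₁ (algebraMap Fq Ff (y : Fq) * Algebra.norm Ff x) *
              χ₂ (b * algebraMap Fq Fk (z : Fq) * x))
          = (-(q : ℂ) ^ 2 + (-1 : ℂ) ^ (k / 2) * (q : ℂ) ^ (k / 2 + 2)) / ((q : ℂ) + 1)} : ℂ)
      = ((q : ℂ) ^ k - 1) / ((q : ℂ) + 1) ∧
    (Nat.card {b : Fk // b ≠ 0 ∧
        (∑ x : Fk, ∑ y : Fqˣ, ∑ z : Fqˣ,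
            χ (a * y) * χ₁ (algebraMap Fq Ff (y : Fq) * Algebra.norm Ff x) *
              χ₂ (b * algebraMap Fq Fk (z : Fq) * x))
          = (-(q : ℂ) ^ 2 + (-1 : ℂ) ^ (k / 2 - 1) * (q : ℂ) ^ (k / 2 + 1)) / ((q : ℂ) + 1)} : ℂ)
      = (q : ℂ) * ((q : ℂ) ^ k - 1) / ((q : ℂ) + 1) := by
  classical
  obtain ⟨m, hkm⟩ := hke
  have hkm2 : k = 2 * m := by omega
  have hm : 0 < m := by omega
  have hk2 : k / 2 = m := by omega
  rw [hk2] at hgcd ⊢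
  have hp2 : 2 ≤ p := (Fact.out : p.Prime).two_le
  have hq2 : 2 ≤ q := by
    rw [hq]; exact hp2.trans (Nat.le_self_pow he.ne' p)
  -- scalar towers
  haveI : IsScalarTower (ZMod p) Fq Ff := IsScalarTower.of_algebraMap_eq' (Subsingleton.elim _ _)
  haveI : IsScalarTower (ZMod p) Fq Fk := IsScalarTower.of_algebraMap_eq' (Subsingleton.elim _ _)
  haveI : IsScalarTower (ZMod p) Ff Fk := IsScalarTower.of_algebraMap_eq' (Subsingleton.elim _ _)
  have hprim := aux_prim χ hχ
  have hprim₂ := aux_prim χ₂ hχ₂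
  have ht1 : ∀ x, χ₁ x = χ (Algebra.trace Fq Ff x) := by
    intro x; rw [hχ₁, hχ, Algebra.trace_trace]
  have ht2 : ∀ x, χ₂ x = χ (Algebra.trace Fq Fk x) := by
    intro x; rw [hχ₂, hχ, Algebra.trace_trace]
  have ht21 : ∀ x, χ₂ x = χ₁ (Algebra.trace Ff Fk x) := by
    intro x; rw [hχ₂, hχ₁, Algebra.trace_trace]
  -- finranks
  have hfr2 : Module.finrank Fq Ff = 2 := by
    have := Module.card_eq_pow_finrank (K := Fq) (V := Ff)
    rw [hcf, hcq] at this
    exact (Nat.pow_right_injective hq2 this).symm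
  have hfrm : Module.finrank Ff Fk = m := by
    have := Module.card_eq_pow_finrank (K := Ff) (V := Fk)
    rw [hck, hcf, ← pow_mul] at this
    have := Nat.pow_right_injective hq2 this
    omega
  -- Frobenius
  haveI : CharP Fk p := charP_of_injective_algebraMap (algebraMap (ZMod p) Fk).injective p
  have hadd : ∀ x y : Fk, (x + y) ^ q = x ^ q + y ^ q := by
    intro x y; rw [hq]; exact add_pow_char_pow x y p e
  have hfrob : ∀ x, χ₂ (x ^ q) = χ₂ x := by
    intro x
    rw [ht2, ht2]
    congr 1
    have := Algebra.trace_eq_of_algEquiv (FiniteField.frobeniusAlgEquivOfAlgebraic Fq Fk) x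
    rw [← this]
    congr 1
    simp [hcq]
  have htr : ∀ c : Ff, algebraMap Fq Ff (Algebra.trace Fq Ff c) = c + c ^ q := by
    intro c
    rw [FiniteField.algebraMap_trace_eq_sum_pow, hfr2]
    simp [Finset.sum_range_succ, hcq]
  have htr0 : ∀ c : Ff, Algebra.trace Fq Ff c = 0 ↔ c + c ^ q = 0 := by
    intro c
    rw [← htr]; exact (map_eq_zero (algebraMap Fq Ff)).symm
  have hneg : ∀ z : Fk, z ^ q = -z → χ₂ z = 1 := by
    intro z hz
    have h0 : (-z) ^ q = - (z ^ q) := by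
      have := aux_sub hadd 0 z
      simpa [zero_pow (by omega : q ≠ 0)] using this
    have h1 : z ^ Fintype.card Ff = z := by
      rw [hcf, sq, pow_mul, hz, h0, hz, neg_neg]
    obtain ⟨z', rfl⟩ := (aux_range z).mp h1
    have h2 : Algebra.trace Fq Ff z' = 0 := by
      rw [htr0]
      apply (algebraMap Ff Fk).injective
      rw [map_add, map_pow, hz]; simp
    rw [ht21, Algebra.trace_algebraMap, ht1, map_nsmul, h2]
    simp
  have hfix : (Finset.univ.filter (fun t : Fk => t ^ (q ^ 2) = t)).card = q ^ 2 := by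
    have : Finset.univ.filter (fun t : Fk => t ^ (q ^ 2) = t) =
        Finset.univ.image (algebraMap Ff Fk) := by
      ext t
      simp only [Finset.mem_filter, Finset.mem_univ, true_and, Finset.mem_image]
      rw [← hcf]; exact aux_range t
    rw [this, Finset.card_image_of_injective _ (algebraMap Ff Fk).injective, Finset.card_univ, hcf]
  -- numbers
  set M := (q ^ k - 1) / (q ^ 2 - 1) with hM
  have hMdvd : M * (q ^ 2 - 1) = q ^ k - 1 := by
    apply Nat.div_mul_cancel
    rw [hkm2, pow_mul]
    simpa using Nat.sub_dvd_pow_sub_pow (q ^ 2) 1 m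
  have hn : Fintype.card Fk = (q + 1) * (M * (q - 1)) + 1 := by
    have h1 : (q + 1) * (q - 1) = q ^ 2 - 1 := by
      have := Nat.sq_sub_sq q 1
      simpa using this.symm
    have h2 : (q + 1) * (M * (q - 1)) = q ^ k - 1 := by
      rw [← hMdvd, ← h1]; ring
    have h3 : 1 ≤ q ^ k := Nat.one_le_pow _ _ (by omega)
    rw [h2, hck]; omega
  have hn2 : (-1 : Fk) ^ (M * (q - 1)) = 1 := by
    have h1 : (-1 : Fk) ^ q = -1 := by
      have := aux_sub hadd 0 1
      simpa [zero_pow (by omega : q ≠ 0)] using this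
    have h2 : (-1 : Fk) ^ (q - 1) = 1 := by
      have h3 : (-1 : Fk) ^ (q - 1) * (-1) = -1 := by
        rw [← pow_succ, Nat.sub_add_cancel (by omega), h1]
      linear_combination -h3
    rw [mul_comm, pow_mul, h2, one_pow]
  set n := M * (q - 1) with hndef
  have hck' : Fintype.card Fk = q ^ (2 * m) := by rw [hck, hkm2]
  have hcount := aux_count q m hq2 hck' χ₂ hprim₂
    (fun c hc => aux_W_value q m n hq2 hck' hn hn2 hadd hfix χ₂ hprim₂ hfrob hneg c hc)
  -- an element whose norm has trace zero
  have hδ : ∃ δ : Ff, δ ≠ 0 ∧ Algebra.trace Fq Ff δ = 0 := by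
    by_contra hcon
    push Not at hcon
    have hinj : Function.Injective (Algebra.trace Fq Ff) := by
      rw [injective_iff_map_eq_zero]
      intro x hx
      by_contra hne
      exact hcon x hne hx
    have := Fintype.card_le_of_injective _ hinj
    rw [hcf, hcq] at this
    nlinarith
  obtain ⟨δ, hδ0, hδ⟩ := hδ
  obtain ⟨x0, hx0⟩ := FiniteField.norm_surjective Ff Fk δ
  have hx00 : x0 ≠ 0 := by
    rintro rfl
    rw [Algebra.norm_zero] at hx0
    exact hδ0 hx0.symm
  have hset : ∀ u : Fkˣ, Algebra.trace Fq Ff (Algebra.norm Ff (x0 * u)) = 0 ↔ u ^ n = 1 := by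
    intro u
    have hδq := (htr0 δ).mp hδ
    rw [htr0, map_mul, hx0, mul_pow]
    have hv0 : Algebra.norm Ff (u : Fk) ≠ 0 := by
      rw [Algebra.norm_ne_zero_iff]; exact u.ne_zero
    have h1 : u ^ n = 1 ↔ (Algebra.norm Ff (u : Fk)) ^ (q - 1) = 1 := by
      rw [Units.ext_iff, ← (algebraMap Ff Fk).injective.eq_iff, map_pow, hnorm, ← pow_mul]
      simp [hndef]
    rw [h1]
    generalize Algebra.norm Ff (u : Fk) = v at *
    have h2 : v ^ q = v ^ (q - 1) * v := by
      rw [← pow_succ, Nat.sub_add_cancel (by omega)]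
    constructor
    · intro h
      have h3 : (δ * v) * (v ^ (q - 1) - 1) = 0 := by
        rw [h2] at h
        linear_combination -h + v ^ (q - 1) * v * hδq
      rcases mul_eq_zero.mp h3 with h4 | h4
      · exact absurd h4 (mul_ne_zero hδ0 hv0)
      · exact sub_eq_zero.mp h4
    · intro h
      rw [h2, h]
      linear_combination v * hδq
  have hq1 : (q : ℂ) + 1 ≠ 0 := by exact_mod_cast Nat.succ_ne_zero q
  have hq0 : (q : ℂ) ≠ 0 := by norm_cast; omega
  have hΛ : ∀ b : Fk, b ≠ 0 → (∑ x : Fk, ∑ y : Fqˣ, ∑ z : Fqˣ,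
            χ (a * y) * χ₁ (algebraMap Fq Ff (y : Fq) * Algebra.norm Ff x) *
              χ₂ (b * algebraMap Fq Fk (z : Fq) * x)) =
        - q * (q + ∑ x : Fk, χ₂ (b * x0 * x ^ (q + 1))) / (q + 1) := by
    intro b hb
    rw [aux_gsum hq2 hm hgcd Fq Ff Fk hcq hfrm χ hprim χ₁ ht1 χ₂ hprim₂ a ha b hb,
      aux_W_eta q n hn]
    rw [← Equiv.sum_comp (Equiv.mulLeft₀ x0 hx00), aux_units]
    simp only [Equiv.mulLeft₀_apply, hset]
    rw [← Finset.sum_filter]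
    have : Algebra.norm Ff (x0 * (0 : Fk)) = 0 := by rw [mul_zero, Algebra.norm_zero]
    rw [this]
    simp only [map_zero, if_true, mul_zero, AddChar.map_zero_eq_one]
    rw [eq_div_iff hq1]
    simp only [mul_assoc]
    ring
  have htrans : ∀ A B : ℂ, (∀ W : ℂ, - q * (q + W) / (q + 1) = A ↔ W = B) →
      Nat.card {b : Fk // b ≠ 0 ∧ (∑ x : Fk, ∑ y : Fqˣ, ∑ z : Fqˣ,
            χ (a * y) * χ₁ (algebraMap Fq Ff (y : Fq) * Algebra.norm Ff x) *
              χ₂ (b * algebraMap Fq Fk (z : Fq) * x)) = A} =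
      Nat.card {c : Fk // c ≠ 0 ∧ ∑ x : Fk, χ₂ (c * x ^ (q + 1)) = B} := by
    intro A B hAB
    refine Nat.card_congr (Equiv.subtypeEquiv (Equiv.mulRight₀ x0 hx00) ?_)
    intro b
    simp only [Equiv.mulRight₀_apply]
    constructor
    · rintro ⟨hb, h⟩
      rw [hΛ b hb, hAB] at h
      exact ⟨mul_ne_zero hb hx00, h⟩
    · rintro ⟨hb, h⟩
      have hb' := left_ne_zero_of_mul hb
      refine ⟨hb', ?_⟩
      rw [hΛ b hb', hAB]; exact h
  have hlin : ∀ W B A : ℂ, A = - q * (q + B) / (q + 1) → (- q * (q + W) / (q + 1) = A ↔ W = B) := by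
    rintro W B A rfl
    rw [div_left_inj' hq1]
    constructor
    · intro h
      have := mul_left_cancel₀ (neg_ne_zero.mpr hq0) h
      linear_combination this
    · rintro rfl; rfl
  rw [htrans _ ((-1) ^ (m + 1) * q ^ (m + 1)) (fun W => hlin _ _ _ ?_),
    htrans _ ((-1) ^ m * q ^ m) (fun W => hlin _ _ _ ?_), hcount.1, hcount.2, hkm2]
  · exact ⟨rfl, rfl⟩
  · congr 1
    obtain ⟨j, rfl⟩ : ∃ j, m = j + 1 := ⟨m - 1, by omega⟩
    rw [Nat.add_sub_cancel]; ring
  · congr 1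
    ring
end
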